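/- For every centrally symmetric convex body K in ℝ³, there exists a full-rank lattice Λ ⊂ ℝ³ such that the translates {K + λ : λ ∈ Λ} have pairwise disjoint interiors and vol(K) / covol(Λ) ≥ 0.54755. (Equivalently, the lattice packing density of K satisfies δ_L(K) ≥ 0.54755.) -/

import Mathlib

open MeasureTheory Pointwise

/-- The covolume of the full-rank lattice generated by the columns of `M`:
the absolute value of the determinant. -/
noncomputable def covol {n : ℕ} (M : Matrix (Fin n) (Fin n) ℝ) : ℝ := |M.det|

/-- The set of points of the lattice generated by the columns of `M`. -/
def latticePoints {n : ℕ} (M : Matrix (Fin n) (Fin n) ℝ) : Set (Fin n → ℝ) :=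
  {v | ∃ z : Fin n → ℤ, v = M.mulVec (fun i => (z i : ℝ))}

/-- `M` generates a full-rank lattice whose translates of `K` have pairwise
disjoint interiors. -/
def IsLatticePacking {n : ℕ} (M : Matrix (Fin n) (Fin n) ℝ)
    (K : Set (Fin n → ℝ)) : Prop :=
  M.det ≠ 0 ∧ ∀ l ∈ latticePoints M, ∀ l' ∈ latticePoints M, l ≠ l' →
    Disjoint (interior (l +ᵥ K)) (interior (l' +ᵥ K))

/-- Scalar data attached to one half of the planar chain. -/
structure HalfData (σ k D g μ D1 Ba Bb ha hb ka kb : ℝ) : Prop where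
  k0 : 0 ≤ k
  k2 : k ^ 2 = 4 * σ ^ 2 - 12 * D
  D1le : 1 ≤ D
  g0 : 0 ≤ g
  gain : 3 * (2 - σ) ^ 2 ≤ 2 * g * (σ + 2 * k) + g ^ 2
  mu_up : 3 * (2 - σ) ^ 2 - g * (σ + 2 * k) ≤ 12 * (1 + D - σ) * (1 - μ)
  mu_lo : 12 * D - 3 * σ ^ 2 + g * (σ - 2 * k) ≤ 12 * (1 + D - σ) * μ
  D1up : 12 * (1 + D - σ) * (D1 - 1) ≤ 2 * g * (σ + 2 * k) + g ^ 2 - 3 * (2 - σ) ^ 2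
  D1one : 1 ≤ D1
  sumB : Ba + Bb = σ + g
  Ba0 : 0 ≤ Ba
  Bb0 : 0 ≤ Bb
  ha0 : 0 ≤ ha
  hb0 : 0 ≤ hb
  ka0 : 0 ≤ ka
  kb0 : 0 ≤ kb
  ka2 : ka ^ 2 = 12 * μ ^ 2 + Ba ^ 2 - 12 * D1
  kb2 : kb ^ 2 = 12 * μ ^ 2 + Bb ^ 2 - 12 * (D1 * D)
  gaina : μ ≤ 1 → 12 * (1 - μ) ^ 2 ≤ 2 * ha * (Ba + 2 * ka) + ha ^ 2
  gainb : μ ≤ 1 → 12 * ((1 - μ) ^ 2 - (D1 - 1) * (D - 1)) ≤ 2 * hb * (Bb + 2 * kb) + hb ^ 2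

lemma gain_lower {h Y R h0 Y0 : ℝ} (hY : 0 ≤ Y) (hYY : Y ≤ Y0) (hh : 0 ≤ h) (h00 : 0 ≤ h0)
    (hR : R ≤ 2 * h * Y + h ^ 2) (hn : 2 * h0 * Y0 + h0 ^ 2 < R ∨ h0 = 0) : h0 ≤ h := by
  rcases hn with hn | hn
  · by_contra hlt
    push Not at hlt
    nlinarith [mul_nonneg hh hY, mul_nonneg h00 hY, mul_le_mul_of_nonneg_left hYY h00,
      mul_nonneg (sub_nonneg.2 hlt.le) hY]
  · linarith

lemma k_upper {k K a : ℝ} (hK : 0 ≤ K) (h : k ^ 2 ≤ a) (h2 : a ≤ K ^ 2) : k ≤ K :=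
  abs_le_of_sq_le_sq' (h.trans h2) hK |>.2

lemma half_piece {σ k D g μ D1 Ba Bb ha hb ka kb : ℝ}
    (H : HalfData σ k D g μ D1 Ba Bb ha hb ka kb) (hi K gU ν d β kB kS h1 h2 h3 h4 c : ℝ)
    (hσl : 1.732 ≤ σ) (hσ : σ ≤ hi) (hhi : hi < 1.8) (hg : g ≤ gU) (hK : 0 ≤ K)
    (hK2 : 4 * hi ^ 2 - 12 ≤ K ^ 2) (hK1 : K ≤ 0.866) (hν0 : 0 < ν) (hν1 : ν < 1)
    (hν : 12 * (1 + hi ^ 2 / 3 - hi) * ν ≤ 3 * (2 - hi) ^ 2 - gU * (hi + 2 * K))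
    (hd0 : 0 ≤ d)
    (hd : 2 * gU * (hi + 2 * K) + gU ^ 2 - 3 * (2 - hi) ^ 2 ≤ 12 * (2 - hi) * d)
    (hβ0 : 0 ≤ β) (hβ : β ^ 2 ≤ 12 * (2 * ν - ν ^ 2))
    (hkB0 : 0 ≤ kB) (hkB : (hi + gU - β) ^ 2 - 12 * (2 * ν - ν ^ 2) ≤ kB ^ 2)
    (hkS0 : 0 ≤ kS) (hkS : ((hi + gU) / 2) ^ 2 - 12 * (2 * ν - ν ^ 2) ≤ kS ^ 2)
    (h10 : 0 ≤ h1) (h20 : 0 ≤ h2) (h30 : 0 ≤ h3) (h40 : 0 ≤ h4)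
    (e1 : 2 * h1 * (hi + gU - β + 2 * kB) + h1 ^ 2 < 12 * ν ^ 2)
    (e2 : 2 * h2 * ((hi + gU) / 2 + 2 * kS) + h2 ^ 2 < 12 * ν ^ 2)
    (e3 : 2 * h3 * (hi + gU - β + 2 * kB) + h3 ^ 2 < 12 * (ν ^ 2 - d * (hi ^ 2 / 3 - 1)))
    (e4 : 2 * h4 * ((hi + gU) / 2 + 2 * kS) + h4 ^ 2 < 12 * (ν ^ 2 - d * (hi ^ 2 / 3 - 1)))
    (c1 : c ≤ h1 + h4) (c2 : c ≤ h2 + h3) : c ≤ ha + hb := by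
  obtain ⟨k0, k2, D1le, g0, gain, mu_up, mu_lo, D1up, D1one, sumB, Ba0, Bb0, ha0, hb0, ka0, kb0,
    ka2, kb2, gaina, gainb⟩ := H
  have hσ2 : σ ^ 2 ≤ hi ^ 2 := pow_le_pow_left₀ (by linarith) hσ 2
  have hkK : k ≤ K := by
    refine k_upper hK (a := 4 * σ ^ 2 - 12) (by linarith) ?_
    linarith
  have hDup : D ≤ hi ^ 2 / 3 := by linarith [sq_nonneg k]
  have hpos : 2 - hi ≤ 1 + D - σ := by linarith
  have hpos2 : 1 + D - σ ≤ 1 + hi ^ 2 / 3 - hi := by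
    have : 0 ≤ (hi - σ) * (hi + σ - 3) := mul_nonneg (by linarith) (by linarith)
    linarith [sq_nonneg k]
  have hYle : σ + 2 * k ≤ hi + 2 * K := by linarith
  have hgY : g * (σ + 2 * k) ≤ gU * (hi + 2 * K) := by
    apply mul_le_mul hg hYle (by linarith) (by linarith)
  have hsq : (2 - hi) ^ 2 ≤ (2 - σ) ^ 2 := pow_le_pow_left₀ (by linarith) (by linarith) 2
  have hμ1 : ν ≤ 1 - μ := by
    by_contra hlt
    push Not at hlt
    have : (1 + D - σ) * (1 - μ) < (1 + D - σ) * ν :=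
      mul_lt_mul_of_pos_left hlt (by linarith)
    have h2' : (1 + D - σ) * ν ≤ (1 + hi ^ 2 / 3 - hi) * ν :=
      mul_le_mul_of_nonneg_right hpos2 hν0.le
    linarith
  have hμ0 : 0 ≤ μ := by
    by_contra hlt
    push Not at hlt
    have h1' : (1 + D - σ) * μ < 0 := mul_neg_of_pos_of_neg (by linarith) hlt
    have h2' : 0 ≤ g * (σ - 2 * k) := mul_nonneg g0 (by linarith)
    have h3' : σ ^ 2 ≤ 1.8 ^ 2 := pow_le_pow_left₀ (by linarith) (by linarith) 2
    linarith
  have hD1 : D1 - 1 ≤ d := by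
    by_contra hlt
    push Not at hlt
    have h1' : (1 + D - σ) * d < (1 + D - σ) * (D1 - 1) :=
      mul_lt_mul_of_pos_left hlt (by linarith)
    have h2' : (2 - hi) * d ≤ (1 + D - σ) * d := mul_le_mul_of_nonneg_right hpos hd0
    have h3' : g ^ 2 ≤ gU ^ 2 := pow_le_pow_left₀ g0 hg 2
    linarith
  have hμsq : μ ^ 2 ≤ (1 - ν) ^ 2 := pow_le_pow_left₀ hμ0 (by linarith) 2
  have hνsq : ν ^ 2 ≤ (1 - μ) ^ 2 := pow_le_pow_left₀ hν0.le (by linarith) 2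
  have hDD : 1 ≤ D1 * D := one_le_mul_of_one_le_of_one_le D1one D1le
  have ka2p := sq_nonneg ka
  have kb2p := sq_nonneg kb
  have hBaβ : β ≤ Ba := k_upper Ba0 (a := 12 * (2 * ν - ν ^ 2)) hβ (by linarith)
  have hBbβ : β ≤ Bb := k_upper Bb0 (a := 12 * (2 * ν - ν ^ 2)) hβ (by linarith)
  have hBa : Ba ≤ hi + gU - β := by linarith
  have hBb : Bb ≤ hi + gU - β := by linarith
  have hBa2 : Ba ^ 2 ≤ (hi + gU - β) ^ 2 := pow_le_pow_left₀ Ba0 hBa 2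
  have hBb2 : Bb ^ 2 ≤ (hi + gU - β) ^ 2 := pow_le_pow_left₀ Bb0 hBb 2
  have hkaB : ka ≤ kB := by
    refine k_upper hkB0 (a := (hi + gU - β) ^ 2 - 12 * (2 * ν - ν ^ 2)) ?_ hkB
    linarith
  have hkbB : kb ≤ kB := by
    refine k_upper hkB0 (a := (hi + gU - β) ^ 2 - 12 * (2 * ν - ν ^ 2)) ?_ hkB
    linarith
  have hprod : (D1 - 1) * (D - 1) ≤ d * (hi ^ 2 / 3 - 1) := by
    apply mul_le_mul hD1 (by linarith) (by linarith) hd0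
  have ga := gaina (by linarith)
  have gb := gainb (by linarith)
  have ga' : 12 * ν ^ 2 ≤ 2 * ha * (Ba + 2 * ka) + ha ^ 2 := by linarith
  have gb' : 12 * (ν ^ 2 - d * (hi ^ 2 / 3 - 1)) ≤ 2 * hb * (Bb + 2 * kb) + hb ^ 2 := by linarith
  rcases le_total Ba Bb with hab | hab
  · have hS : Ba ≤ (hi + gU) / 2 := by linarith
    have hS2 : Ba ^ 2 ≤ ((hi + gU) / 2) ^ 2 := pow_le_pow_left₀ Ba0 hS 2
    have hkS' : ka ≤ kS := by
      refine k_upper hkS0 (a := ((hi + gU) / 2) ^ 2 - 12 * (2 * ν - ν ^ 2)) ?_ hkS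
      linarith
    have := gain_lower (by linarith) (by linarith) ha0 h20 ga' (Or.inl e2)
    have := gain_lower (by linarith) (by linarith) hb0 h30 gb' (Or.inl e3)
    linarith
  · have hS : Bb ≤ (hi + gU) / 2 := by linarith
    have hS2 : Bb ^ 2 ≤ ((hi + gU) / 2) ^ 2 := pow_le_pow_left₀ Bb0 hS 2
    have hkS' : kb ≤ kS := by
      refine k_upper hkS0 (a := ((hi + gU) / 2) ^ 2 - 12 * (2 * ν - ν ^ 2)) ?_ hkS
      linarith
    have := gain_lower (by linarith) (by linarith) ha0 h10 ga' (Or.inl e1)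
    have := gain_lower (by linarith) (by linarith) hb0 h40 gb' (Or.inl e4)
    linarith

lemma half_gl {σ k D g μ D1 Ba Bb ha hb ka kb : ℝ}
    (H : HalfData σ k D g μ D1 Ba Bb ha hb ka kb) (hi K gl : ℝ)
    (hσl : 1.732 ≤ σ) (hσ : σ ≤ hi) (hhi : hi < 2) (hK : 0 ≤ K)
    (hK2 : 4 * hi ^ 2 - 12 ≤ K ^ 2) (hgl : 0 ≤ gl)
    (e : 2 * gl * (hi + 2 * K) + gl ^ 2 < 3 * (2 - hi) ^ 2) : gl ≤ g := by
  have hkK : k ≤ K := by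
    refine k_upper hK (a := 4 * σ ^ 2 - 12) (by linarith [H.k2, H.D1le]) ?_
    nlinarith
  have hsq : (2 - hi) ^ 2 ≤ (2 - σ) ^ 2 := by nlinarith
  have := H.gain
  exact gain_lower (Y := σ + 2 * k) (Y0 := hi + 2 * K) (R := 3 * (2 - hi) ^ 2)
    (by linarith [H.k0]) (by linarith) H.g0 hgl (by linarith) (Or.inl e)

lemma half_bound {σ k D g μ D1 Ba Bb ha hb ka kb : ℝ}
    (H : HalfData σ k D g μ D1 Ba Bb ha hb ka kb) (hσ0 : 0 ≤ σ) :
    1.7855 ≤ σ + g + ha + hb := by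
  have hσl : 1.732 ≤ σ := by
    have := H.k2
    have := H.D1le
    nlinarith [sq_nonneg k]
  by_contra hT
  push Not at hT
  have g0 := H.g0
  have ha0 := H.ha0
  have hb0 := H.hb0
  rcases le_or_gt σ 1.736 with hs | hs
  · have hgl := half_gl H 1.736 0.2341 0.04692 hσl hs (by norm_num) (by norm_num) (by norm_num)
      (by norm_num) (by norm_num)
    rcases le_or_gt g 0.05079 with hg | hg
    · have := half_piece H 1.736 0.2341 0.05079 0.03014 0.0055 0.844 0.42 0.2928
        0.00305 0.00368 0.00297 0.00357 0.00662
        hσl hs (by norm_num) hg (by norm_num) (by norm_num) (by norm_num) (by norm_num)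
        (by norm_num) (by norm_num) (by norm_num) (by norm_num) (by norm_num) (by norm_num)
        (by norm_num) (by norm_num) (by norm_num) (by norm_num) (by norm_num) (by norm_num)
        (by norm_num) (by norm_num) (by norm_num) (by norm_num) (by norm_num) (by norm_num)
        (by norm_num) (by norm_num)
      linarith
    rcases le_or_gt g 0.05351 with hg | hg
    · have := half_piece H 1.736 0.2341 0.05351 0.02828 0.00937 0.8179 0.5244 0.3626
        0.00237 0.00295 0.00224 0.0028 0.00517
        hσl hs (by norm_num) hg (by norm_num) (by norm_num) (by norm_num) (by norm_num)
        (by norm_num) (by norm_num) (by norm_num) (by norm_num) (by norm_num) (by norm_num)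
        (by norm_num) (by norm_num) (by norm_num) (by norm_num) (by norm_num) (by norm_num)
        (by norm_num) (by norm_num) (by norm_num) (by norm_num) (by norm_num) (by norm_num)
        (by norm_num) (by norm_num)
      linarith
    linarith
  rcases le_or_gt σ 1.739 with hs | hs
  · have hgl := half_gl H 1.739 0.3107 0.04289 hσl hs (by norm_num) (by norm_num) (by norm_num)
      (by norm_num) (by norm_num)
    rcases le_or_gt g 0.04539 with hg | hg
    · have := half_piece H 1.739 0.3107 0.04539 0.03011 0.00383 0.8436 0.4164 0.2903
        0.00306 0.00368 0.00296 0.00356 0.00662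
        hσl hs (by norm_num) hg (by norm_num) (by norm_num) (by norm_num) (by norm_num)
        (by norm_num) (by norm_num) (by norm_num) (by norm_num) (by norm_num) (by norm_num)
        (by norm_num) (by norm_num) (by norm_num) (by norm_num) (by norm_num) (by norm_num)
        (by norm_num) (by norm_num) (by norm_num) (by norm_num) (by norm_num) (by norm_num)
        (by norm_num) (by norm_num)
      linarith
    rcases le_or_gt g 0.04951 with hg | hg
    · have := half_piece H 1.739 0.3107 0.04951 0.0271 0.01016 0.8009 0.5778 0.3977
        0.00205 0.0026 0.00182 0.00231 0.00436
        hσl hs (by norm_num) hg (by norm_num) (by norm_num) (by norm_num) (by norm_num)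
        (by norm_num) (by norm_num) (by norm_num) (by norm_num) (by norm_num) (by norm_num)
        (by norm_num) (by norm_num) (by norm_num) (by norm_num) (by norm_num) (by norm_num)
        (by norm_num) (by norm_num) (by norm_num) (by norm_num) (by norm_num) (by norm_num)
        (by norm_num) (by norm_num)
      linarith
    linarith
  rcases le_or_gt σ 1.741 with hs | hs
  · have hgl := half_gl H 1.741 0.3526 0.04079 hσl hs (by norm_num) (by norm_num) (by norm_num)
      (by norm_num) (by norm_num)
    rcases le_or_gt g 0.04378 with hg | hg
    · have := half_piece H 1.741 0.3526 0.04378 0.02912 0.00479 0.8298 0.4726 0.3282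
        0.00267 0.00328 0.00251 0.00308 0.00575
        hσl hs (by norm_num) hg (by norm_num) (by norm_num) (by norm_num) (by norm_num)
        (by norm_num) (by norm_num) (by norm_num) (by norm_num) (by norm_num) (by norm_num)
        (by norm_num) (by norm_num) (by norm_num) (by norm_num) (by norm_num) (by norm_num)
        (by norm_num) (by norm_num) (by norm_num) (by norm_num) (by norm_num) (by norm_num)
        (by norm_num) (by norm_num)
      linarith
    rcases le_or_gt g 0.0465 with hg | hg
    · have := half_piece H 1.741 0.3526 0.0465 0.02706 0.00915 0.8004 0.5777 0.3977
        0.00204 0.00259 0.00178 0.00226 0.0043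
        hσl hs (by norm_num) hg (by norm_num) (by norm_num) (by norm_num) (by norm_num)
        (by norm_num) (by norm_num) (by norm_num) (by norm_num) (by norm_num) (by norm_num)
        (by norm_num) (by norm_num) (by norm_num) (by norm_num) (by norm_num) (by norm_num)
        (by norm_num) (by norm_num) (by norm_num) (by norm_num) (by norm_num) (by norm_num)
        (by norm_num) (by norm_num)
      linarith
    linarith
  rcases le_or_gt σ 1.743 with hs | hs
  · have hgl := half_gl H 1.743 0.3902 0.03896 hσl hs (by norm_num) (by norm_num) (by norm_num)
      (by norm_num) (by norm_num)
    rcases le_or_gt g 0.04153 with hg | hg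
    · have := half_piece H 1.743 0.3902 0.04153 0.02884 0.00428 0.8259 0.4867 0.3376
        0.00258 0.00318 0.00241 0.00297 0.00555
        hσl hs (by norm_num) hg (by norm_num) (by norm_num) (by norm_num) (by norm_num)
        (by norm_num) (by norm_num) (by norm_num) (by norm_num) (by norm_num) (by norm_num)
        (by norm_num) (by norm_num) (by norm_num) (by norm_num) (by norm_num) (by norm_num)
        (by norm_num) (by norm_num) (by norm_num) (by norm_num) (by norm_num) (by norm_num)
        (by norm_num) (by norm_num)
      linarith
    rcases le_or_gt g 0.0445 with hg | hg
    · have := half_piece H 1.743 0.3902 0.0445 0.02652 0.00922 0.7924 0.6019 0.4133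
        0.00191 0.00245 0.00159 0.00204 0.00395
        hσl hs (by norm_num) hg (by norm_num) (by norm_num) (by norm_num) (by norm_num)
        (by norm_num) (by norm_num) (by norm_num) (by norm_num) (by norm_num) (by norm_num)
        (by norm_num) (by norm_num) (by norm_num) (by norm_num) (by norm_num) (by norm_num)
        (by norm_num) (by norm_num) (by norm_num) (by norm_num) (by norm_num) (by norm_num)
        (by norm_num) (by norm_num)
      linarith
    linarith
  rcases le_or_gt σ 1.745 with hs | hs
  · have hgl := half_gl H 1.745 0.4244 0.03733 hσl hs (by norm_num) (by norm_num) (by norm_num)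
      (by norm_num) (by norm_num)
    rcases le_or_gt g 0.03973 with hg | hg
    · have := half_piece H 1.745 0.4244 0.03973 0.0284 0.00412 0.8197 0.5093 0.3527
        0.00243 0.00302 0.00225 0.00279 0.00522
        hσl hs (by norm_num) hg (by norm_num) (by norm_num) (by norm_num) (by norm_num)
        (by norm_num) (by norm_num) (by norm_num) (by norm_num) (by norm_num) (by norm_num)
        (by norm_num) (by norm_num) (by norm_num) (by norm_num) (by norm_num) (by norm_num)
        (by norm_num) (by norm_num) (by norm_num) (by norm_num) (by norm_num) (by norm_num)
        (by norm_num) (by norm_num)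
      linarith
    rcases le_or_gt g 0.0425 with hg | hg
    · have := half_piece H 1.745 0.4244 0.0425 0.02618 0.0089 0.7874 0.6166 0.4228
        0.00184 0.00236 0.00148 0.0019 0.00374
        hσl hs (by norm_num) hg (by norm_num) (by norm_num) (by norm_num) (by norm_num)
        (by norm_num) (by norm_num) (by norm_num) (by norm_num) (by norm_num) (by norm_num)
        (by norm_num) (by norm_num) (by norm_num) (by norm_num) (by norm_num) (by norm_num)
        (by norm_num) (by norm_num) (by norm_num) (by norm_num) (by norm_num) (by norm_num)
        (by norm_num) (by norm_num)
      linarith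
    linarith
  rcases le_or_gt σ 1.7475 with hs | hs
  · have hgl := half_gl H 1.7475 0.4638 0.03551 hσl hs (by norm_num) (by norm_num) (by norm_num)
      (by norm_num) (by norm_num)
    rcases le_or_gt g 0.03745 with hg | hg
    · have := half_piece H 1.7475 0.4638 0.03745 0.02806 0.00347 0.8148 0.5265 0.3641
        0.00233 0.00291 0.00214 0.00268 0.00501
        hσl hs (by norm_num) hg (by norm_num) (by norm_num) (by norm_num) (by norm_num)
        (by norm_num) (by norm_num) (by norm_num) (by norm_num) (by norm_num) (by norm_num)
        (by norm_num) (by norm_num) (by norm_num) (by norm_num) (by norm_num) (by norm_num)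
        (by norm_num) (by norm_num) (by norm_num) (by norm_num) (by norm_num) (by norm_num)
        (by norm_num) (by norm_num)
      linarith
    rcases le_or_gt g 0.0405 with hg | hg
    · have := half_piece H 1.7475 0.4638 0.0405 0.02555 0.00893 0.778 0.644 0.4404
        0.0017 0.0022 0.00128 0.00166 0.00336
        hσl hs (by norm_num) hg (by norm_num) (by norm_num) (by norm_num) (by norm_num)
        (by norm_num) (by norm_num) (by norm_num) (by norm_num) (by norm_num) (by norm_num)
        (by norm_num) (by norm_num) (by norm_num) (by norm_num) (by norm_num) (by norm_num)
        (by norm_num) (by norm_num) (by norm_num) (by norm_num) (by norm_num) (by norm_num)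
        (by norm_num) (by norm_num)
      linarith
    linarith
  rcases le_or_gt σ 1.7505 with hs | hs
  · have hgl := half_gl H 1.7505 0.507 0.03357 hσl hs (by norm_num) (by norm_num) (by norm_num)
      (by norm_num) (by norm_num)
    rcases le_or_gt g 0.03551 with hg | hg
    · have := half_piece H 1.7505 0.507 0.03551 0.02724 0.00363 0.803 0.567 0.3907
        0.0021 0.00265 0.00188 0.00237 0.00447
        hσl hs (by norm_num) hg (by norm_num) (by norm_num) (by norm_num) (by norm_num)
        (by norm_num) (by norm_num) (by norm_num) (by norm_num) (by norm_num) (by norm_num)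
        (by norm_num) (by norm_num) (by norm_num) (by norm_num) (by norm_num) (by norm_num)
        (by norm_num) (by norm_num) (by norm_num) (by norm_num) (by norm_num) (by norm_num)
        (by norm_num) (by norm_num)
      linarith
    rcases le_or_gt g 0.03801 with hg | hg
    · have := half_piece H 1.7505 0.507 0.03801 0.02512 0.00831 0.7715 0.6626 0.4521
        0.00161 0.0021 0.00116 0.00151 0.00312
        hσl hs (by norm_num) hg (by norm_num) (by norm_num) (by norm_num) (by norm_num)
        (by norm_num) (by norm_num) (by norm_num) (by norm_num) (by norm_num) (by norm_num)
        (by norm_num) (by norm_num) (by norm_num) (by norm_num) (by norm_num) (by norm_num)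
        (by norm_num) (by norm_num) (by norm_num) (by norm_num) (by norm_num) (by norm_num)
        (by norm_num) (by norm_num)
      linarith
    linarith
  rcases le_or_gt σ 1.755 with hs | hs
  · have hgl := half_gl H 1.755 0.5658 0.03102 hσl hs (by norm_num) (by norm_num) (by norm_num)
      (by norm_num) (by norm_num)
    rcases le_or_gt g 0.03257 with hg | hg
    · have := half_piece H 1.755 0.5658 0.03257 0.02639 0.00307 0.7905 0.6076 0.417
        0.00188 0.00241 0.00166 0.00213 0.00401
        hσl hs (by norm_num) hg (by norm_num) (by norm_num) (by norm_num) (by norm_num)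
        (by norm_num) (by norm_num) (by norm_num) (by norm_num) (by norm_num) (by norm_num)
        (by norm_num) (by norm_num) (by norm_num) (by norm_num) (by norm_num) (by norm_num)
        (by norm_num) (by norm_num) (by norm_num) (by norm_num) (by norm_num) (by norm_num)
        (by norm_num) (by norm_num)
      linarith
    rcases le_or_gt g 0.03501 with hg | hg
    · have := half_piece H 1.755 0.5658 0.03501 0.02423 0.00792 0.7579 0.7006 0.476
        0.00144 0.0019 0.00092 0.00122 0.00266
        hσl hs (by norm_num) hg (by norm_num) (by norm_num) (by norm_num) (by norm_num)
        (by norm_num) (by norm_num) (by norm_num) (by norm_num) (by norm_num) (by norm_num)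
        (by norm_num) (by norm_num) (by norm_num) (by norm_num) (by norm_num) (by norm_num)
        (by norm_num) (by norm_num) (by norm_num) (by norm_num) (by norm_num) (by norm_num)
        (by norm_num) (by norm_num)
      linarith
    linarith
  rcases le_or_gt σ 1.7625 with hs | hs
  · have hgl := half_gl H 1.7625 0.6525 0.02745 hσl hs (by norm_num) (by norm_num) (by norm_num)
      (by norm_num) (by norm_num)
    rcases le_or_gt g 0.029 with hg | hg
    · have := half_piece H 1.7625 0.6525 0.029 0.0245 0.00335 0.7621 0.6921 0.4708
        0.00149 0.00195 0.00119 0.00157 0.00306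
        hσl hs (by norm_num) hg (by norm_num) (by norm_num) (by norm_num) (by norm_num)
        (by norm_num) (by norm_num) (by norm_num) (by norm_num) (by norm_num) (by norm_num)
        (by norm_num) (by norm_num) (by norm_num) (by norm_num) (by norm_num) (by norm_num)
        (by norm_num) (by norm_num) (by norm_num) (by norm_num) (by norm_num) (by norm_num)
        (by norm_num) (by norm_num)
      linarith
    rcases le_or_gt g 0.03051 with hg | hg
    · have := half_piece H 1.7625 0.6525 0.03051 0.02308 0.00663 0.7399 0.7494 0.5062
        0.00125 0.00167 0.00069 0.00093 0.00218
        hσl hs (by norm_num) hg (by norm_num) (by norm_num) (by norm_num) (by norm_num)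
        (by norm_num) (by norm_num) (by norm_num) (by norm_num) (by norm_num) (by norm_num)
        (by norm_num) (by norm_num) (by norm_num) (by norm_num) (by norm_num) (by norm_num)
        (by norm_num) (by norm_num) (by norm_num) (by norm_num) (by norm_num) (by norm_num)
        (by norm_num) (by norm_num)
      linarith
    linarith
  rcases le_or_gt σ 1.78 with hs | hs
  · have hgl := half_gl H 1.78 0.8208 0.02115 hσl hs (by norm_num) (by norm_num) (by norm_num)
      (by norm_num) (by norm_num)
    rcases le_or_gt g 0.02207 with hg | hg
    · have := half_piece H 1.78 0.8208 0.02207 0.02102 0.0024 0.7065 0.8374 0.5592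
        0.00095 0.00131 0.00066 0.00091 0.00186
        hσl hs (by norm_num) hg (by norm_num) (by norm_num) (by norm_num) (by norm_num)
        (by norm_num) (by norm_num) (by norm_num) (by norm_num) (by norm_num) (by norm_num)
        (by norm_num) (by norm_num) (by norm_num) (by norm_num) (by norm_num) (by norm_num)
        (by norm_num) (by norm_num) (by norm_num) (by norm_num) (by norm_num) (by norm_num)
        (by norm_num) (by norm_num)
      linarith
    rcases le_or_gt g 0.02301 with hg | hg
    · have := half_piece H 1.78 0.8208 0.02301 0.02005 0.00485 0.6901 0.8731 0.58
        0.00084 0.00116 0.00027 0.00037 0.00121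
        hσl hs (by norm_num) hg (by norm_num) (by norm_num) (by norm_num) (by norm_num)
        (by norm_num) (by norm_num) (by norm_num) (by norm_num) (by norm_num) (by norm_num)
        (by norm_num) (by norm_num) (by norm_num) (by norm_num) (by norm_num) (by norm_num)
        (by norm_num) (by norm_num) (by norm_num) (by norm_num) (by norm_num) (by norm_num)
        (by norm_num) (by norm_num)
      linarith
    linarith
  rcases le_or_gt σ 1.8095 with hs | hs
  · have hgl := half_gl H 1.8095 1.0475 0.01391 hσl hs (by norm_num) (by norm_num) (by norm_num)
      (by norm_num) (by norm_num)
    linarith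
  linarith

/-- Planar cross product. -/
def cr (a b : ℝ × ℝ) : ℝ := a.1 * b.2 - a.2 * b.1

/-- The mixed determinant of two hexagons. -/
noncomputable def mm (p q p' q' : ℝ × ℝ) : ℝ := (cr p q' + cr p' q) / 2

/-- The sum of the three cross products between two hexagons. -/
def BB (p q p' q' : ℝ × ℝ) : ℝ := cr p p' + cr q q' + cr (q - p) (q' - p')

/-- A strictly convex norm on the plane. -/
structure PNorm (g : ℝ × ℝ → ℝ) : Prop where
  add : ∀ x y, g (x + y) ≤ g x + g y
  smul : ∀ (t : ℝ) x, g (t • x) = |t| * g x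
  pos : ∀ x, x ≠ 0 → 0 < g x
  cont : Continuous g
  bdd : ∃ c > 0, ∀ x, c * ‖x‖ ≤ g x
  strict : ∀ x y, cr x y ≠ 0 → g (x + y) < g x + g y

/-- Unit hexagons. -/
structure Hex (g : ℝ × ℝ → ℝ) (p q : ℝ × ℝ) : Prop where
  hp : g p = 1
  hq : g q = 1
  hr : g (q - p) = 1
  hD : 0 < cr p q

lemma nn_nonneg (p q p' q' : ℝ × ℝ) :
    0 ≤ 12 * mm p q p' q' ^ 2 + BB p q p' q' ^ 2 - 12 * (cr p q * cr p' q') := by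
  obtain ⟨a, b⟩ := p
  obtain ⟨c, d⟩ := q
  obtain ⟨a', b'⟩ := p'
  obtain ⟨c', d'⟩ := q'
  simp only [mm, BB, cr, Prod.fst_sub, Prod.snd_sub]
  set c0 := a * b' - b * a'
  set c1 := c * d' - d * c'
  set c2 := (c - a) * (d' - b') - (d - b) * (c' - a') with hc2
  have : 12 * ((a * d' - b * c' + (a' * d - b' * c)) / 2) ^ 2 + (c0 + c1 + c2) ^ 2 -
      12 * ((a * d - b * c) * (a' * d' - b' * c')) =
      2 * ((c0 - c1) ^ 2 + (c0 - c2) ^ 2 + (c1 - c2) ^ 2) := by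
    simp only [c0, c1, c2]; ring
  rw [this]; positivity

lemma split_alg_real (m D D' c0 c1 c2 t0 t1 t2 k DE Dm μ : ℝ)
    (ht0 : 0 ≤ t0) (ht1 : 0 ≤ t1) (ht2 : 0 ≤ t2) (hk : 0 ≤ k)
    (hk2 : k ^ 2 = 12 * m ^ 2 + (c0 + c1 + c2) ^ 2 - 12 * (D * D'))
    (hQc : (c0 + c1 + c2) ^ 2 - 2 * (c0 ^ 2 + c1 ^ 2 + c2 ^ 2) = 4 * (D * D' - m ^ 2))
    (hQ : (c0 + t0 + (c1 + t1) + (c2 + t2)) ^ 2 - 2 * ((c0 + t0) ^ 2 + (c1 + t1) ^ 2 + (c2 + t2) ^ 2)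
      = 4 * Dm * DE)
    (hP : (c0 + t0 + (c1 + t1) + (c2 + t2)) * (c0 + c1 + c2)
      - 2 * ((c0 + t0) * c0 + (c1 + t1) * c1 + (c2 + t2) * c2) = 4 * DE * μ)
    (hDE : DE = D + D' - 2 * m) (g B : ℝ) (hg : g = t0 + t1 + t2) (hB : B = c0 + c1 + c2) :
    12 * DE * (Dm - 1) ≤ 2 * g * (B + 2 * k) + g ^ 2 - 12 * ((1 - m) ^ 2 - (D - 1) * (D' - 1)) ∧
    12 * ((1 - m) ^ 2 - (D - 1) * (D' - 1)) - g * (B + 2 * k) ≤ 12 * DE * (1 - μ) ∧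
    12 * (D * D' - m ^ 2) + g * (B - 2 * k) ≤ 12 * DE * μ := by
  have hs : k ^ 2 = 2 * ((c0 - c1) ^ 2 + (c0 - c2) ^ 2 + (c1 - c2) ^ 2) := by linarith
  have key : ∀ x y z : ℝ, k ^ 2 = 2 * ((x - y) ^ 2 + (x - z) ^ 2 + (y - z) ^ 2) →
      -k ≤ 3 * x - (x + y + z) ∧ 3 * x - (x + y + z) ≤ k := by
    intro x y z h
    apply abs_le_of_sq_le_sq' _ hk
    nlinarith [sq_nonneg (y - z)]
  obtain ⟨a0, b0⟩ := key c0 c1 c2 hs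
  obtain ⟨a1, b1⟩ := key c1 c0 c2 (by rw [hs]; ring)
  obtain ⟨a2, b2⟩ := key c2 c0 c1 (by rw [hs]; ring)
  have A : -(k * g) ≤ 3 * (c0 * t0 + c1 * t1 + c2 * t2) - B * g := by
    have e0 := mul_le_mul_of_nonneg_right a0 ht0
    have e1 := mul_le_mul_of_nonneg_right a1 ht1
    have e2 := mul_le_mul_of_nonneg_right a2 ht2
    subst hg hB
    linarith
  have A' : 3 * (c0 * t0 + c1 * t1 + c2 * t2) - B * g ≤ k * g := by
    have e0 := mul_le_mul_of_nonneg_right b0 ht0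
    have e1 := mul_le_mul_of_nonneg_right b1 ht1
    have e2 := mul_le_mul_of_nonneg_right b2 ht2
    subst hg hB
    linarith
  have hP' : 4 * DE * μ = 4 * (D * D' - m ^ 2) + B * g - 2 * (c0 * t0 + c1 * t1 + c2 * t2) := by
    rw [← hP, ← hQc, hg, hB]; ring
  have hQ' : 4 * Dm * DE = 4 * (D * D' - m ^ 2) + 2 * (B * g - 2 * (c0 * t0 + c1 * t1 + c2 * t2))
      + (g ^ 2 - 2 * (t0 ^ 2 + t1 ^ 2 + t2 ^ 2)) := by
    rw [← hQ, ← hQc, hg, hB]; ring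
  have hT : g ^ 2 ≤ 3 * (t0 ^ 2 + t1 ^ 2 + t2 ^ 2) := by
    rw [hg]; nlinarith [sq_nonneg (t0 - t1), sq_nonneg (t0 - t2), sq_nonneg (t1 - t2)]
  refine ⟨?_, ?_, ?_⟩
  · have : 12 * ((1 - m) ^ 2 - (D - 1) * (D' - 1)) = 12 * DE - 12 * (D * D' - m ^ 2) := by
      rw [hDE]; ring
    linarith
  · have : 12 * ((1 - m) ^ 2 - (D - 1) * (D' - 1)) = 12 * DE - 12 * (D * D' - m ^ 2) := by
      rw [hDE]; ring
    linarith
  · linarith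

lemma split_alg (p q p' q' P Q : ℝ × ℝ) (hX : mm p' q' P Q = mm p q P Q)
    (ht0 : 0 ≤ cr p P + cr P p' - cr p p') (ht1 : 0 ≤ cr q Q + cr Q q' - cr q q')
    (ht2 : 0 ≤ cr (q - p) (Q - P) + cr (Q - P) (q' - p') - cr (q - p) (q' - p'))
    (k g : ℝ) (hk : 0 ≤ k)
    (hk2 : k ^ 2 = 12 * mm p q p' q' ^ 2 + BB p q p' q' ^ 2 - 12 * (cr p q * cr p' q'))
    (hg : g = BB p q P Q + BB P Q p' q' - BB p q p' q') :
    12 * (cr p q + cr p' q' - 2 * mm p q p' q') * (cr P Q - 1) ≤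
      2 * g * (BB p q p' q' + 2 * k) + g ^ 2
        - 12 * ((1 - mm p q p' q') ^ 2 - (cr p q - 1) * (cr p' q' - 1)) ∧
    12 * ((1 - mm p q p' q') ^ 2 - (cr p q - 1) * (cr p' q' - 1)) - g * (BB p q p' q' + 2 * k) ≤
      12 * (cr p q + cr p' q' - 2 * mm p q p' q') * (1 - mm p q P Q) ∧
    12 * (cr p q * cr p' q' - mm p q p' q' ^ 2) + g * (BB p q p' q' - 2 * k) ≤
      12 * (cr p q + cr p' q' - 2 * mm p q p' q') * mm p q P Q := by
  refine split_alg_real (mm p q p' q') (cr p q) (cr p' q') (cr p p') (cr q q')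
    (cr (q - p) (q' - p')) _ _ _ k _ (cr P Q) (mm p q P Q) ht0 ht1 ht2 hk hk2 ?_ ?_ ?_ rfl g _ ?_ rfl
  · simp only [mm, cr, Prod.fst_sub, Prod.snd_sub]; ring
  · have h2 : (mm p' q' P Q - mm p q P Q) ^ 2 = 0 := by rw [hX]; ring
    have : ∀ x y : ℝ, x = y + (-4) * (mm p' q' P Q - mm p q P Q) ^ 2 → x = y := by
      intro x y h; rw [h, h2]; ring
    apply this
    simp only [mm, cr, Prod.fst_sub, Prod.snd_sub]; ring
  · have h2 : (mm p' q' P Q - mm p q P Q) = 0 := by rw [hX]; ring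
    have : ∀ x y : ℝ, x = y + (-4) * ((mm p' q' P Q - mm p q P Q) * (mm p q p' q' - cr p q))
        → x = y := by
      intro x y h; rw [h, h2]; ring
    apply this
    simp only [mm, cr, Prod.fst_sub, Prod.snd_sub]; ring
  · rw [hg]; simp only [BB]; ring

namespace PNorm

variable {g : ℝ × ℝ → ℝ}

lemma zero (h : PNorm g) : g 0 = 0 := by
  have := h.smul 0 0
  simpa using this

lemma nonneg (h : PNorm g) (x : ℝ × ℝ) : 0 ≤ g x := by
  by_cases hx : x = 0
  · rw [hx, h.zero]
  · exact (h.pos x hx).le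

lemma neg (h : PNorm g) (x : ℝ × ℝ) : g (-x) = g x := by
  have := h.smul (-1) x
  simpa using this

lemma comb (h : PNorm g) {x y : ℝ} (hx : 0 ≤ x) (hy : 0 ≤ y) (u v : ℝ × ℝ) :
    g (x • u + y • v) ≤ x * g u + y * g v := by
  have := h.add (x • u) (y • v)
  rwa [h.smul, h.smul, abs_of_nonneg hx, abs_of_nonneg hy] at this

lemma comb_lt (h : PNorm g) {x y : ℝ} (hx : 0 < x) (hy : 0 < y) (u v : ℝ × ℝ) (huv : cr u v ≠ 0) :
    g (x • u + y • v) < x * g u + y * g v := by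
  have := h.strict (x • u) (y • v) (by
    have : cr (x • u) (y • v) = x * y * cr u v := by simp [cr]; ring
    rw [this]; positivity)
  rwa [h.smul, h.smul, abs_of_pos hx, abs_of_pos hy] at this

end PNorm

lemma cr_decomp (p q x : ℝ × ℝ) (hD : 0 < cr p q) :
    x = (cr x q / cr p q) • p + (cr p x / cr p q) • q := by
  have h0 : cr p q ≠ 0 := hD.ne'
  ext
  · simp only [Prod.fst_add, Prod.smul_fst, smul_eq_mul]
    field_simp
    simp only [cr]; ring
  · simp only [Prod.snd_add, Prod.smul_snd, smul_eq_mul]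
    field_simp
    simp only [cr]; ring

lemma cr_neg_symm (x y : ℝ × ℝ) : cr y x = - cr x y := by simp [cr]; ring

lemma cr_plucker (a b c d : ℝ × ℝ) : cr a b * cr c d - cr a c * cr b d + cr a d * cr b c = 0 := by
  simp only [cr]; ring

lemma cr_self (x : ℝ × ℝ) : cr x x = 0 := by simp only [cr]; ring

lemma cr_sub_right (x y z : ℝ × ℝ) : cr x (y - z) = cr x y - cr x z := by simp [cr]; ring
lemma cr_sub_left (x y z : ℝ × ℝ) : cr (x - y) z = cr x z - cr y z := by simp [cr]; ring
lemma cr_neg_right (x y : ℝ × ℝ) : cr x (-y) = -cr x y := by simp [cr]; ring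
lemma cr_neg_left (x y : ℝ × ℝ) : cr (-x) y = -cr x y := by simp [cr]; ring
lemma cr_smul_right (t : ℝ) (x y : ℝ × ℝ) : cr x (t • y) = t * cr x y := by simp [cr]; ring
lemma cr_smul_left (t : ℝ) (x y : ℝ × ℝ) : cr (t • x) y = t * cr x y := by simp [cr]; ring
lemma cr_add_right (x y z : ℝ × ℝ) : cr x (y + z) = cr x y + cr x z := by simp [cr]; ring
lemma cr_add_left (x y z : ℝ × ℝ) : cr (x + y) z = cr x z + cr y z := by simp [cr]; ring

namespace Hex

variable {g : ℝ × ℝ → ℝ} {p q p' q' : ℝ × ℝ}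

lemma rot (hg : PNorm g) (h : Hex g p q) : Hex g q (q - p) := by
  refine ⟨h.hq, h.hr, ?_, ?_⟩
  · have : q - p - q = -p := by abel
    rw [this, hg.neg, h.hp]
  · rw [cr_sub_right, cr_self, cr_neg_symm p q]; linarith [h.hD]

/-- A unit point in the cone of `p, q` has coordinates at most one and coordinate sum at
least one. -/
lemma coord (hg : PNorm g) (h : Hex g p q) {a b : ℝ} (ha : 0 ≤ a) (hb : 0 ≤ b)
    (hx : g (a • p + b • q) = 1) : 1 ≤ a + b ∧ a ≤ 1 ∧ b ≤ 1 := by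
  have h1 : 1 ≤ a + b := by
    have := hg.comb ha hb p q
    rw [hx, h.hp, h.hq] at this; linarith
  have e1 : (a + b) • p = (1:ℝ) • (a • p + b • q) + b • (-(q - p)) := by
    module
  have e2 : (a + b) • q = (1:ℝ) • (a • p + b • q) + a • (q - p) := by
    module
  have f1 := hg.comb zero_le_one hb (a • p + b • q) (-(q - p))
  have f2 := hg.comb zero_le_one ha (a • p + b • q) (q - p)
  rw [← e1, hg.smul, hg.neg, abs_of_nonneg (by linarith), h.hp, h.hr, hx] at f1
  rw [← e2, hg.smul, abs_of_nonneg (by linarith), h.hq, h.hr, hx] at f2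
  refine ⟨h1, by linarith, by linarith⟩

lemma mono (hg : PNorm g) (h : Hex g p q) (h' : Hex g p' q') (h1 : 0 ≤ cr p p')
    (h2 : 0 ≤ cr p' q) : 0 ≤ cr q q' := by
  by_contra hlt
  push Not at hlt
  have hD := h.hD
  obtain ⟨a, ha⟩ : ∃ a, a = cr p' q / cr p q := ⟨_, rfl⟩
  obtain ⟨b, hb⟩ : ∃ a, a = cr p p' / cr p q := ⟨_, rfl⟩
  obtain ⟨c, hc⟩ : ∃ a, a = cr q' q / cr p q := ⟨_, rfl⟩
  obtain ⟨d, hd⟩ : ∃ a, a = cr p q' / cr p q := ⟨_, rfl⟩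
  have ep : p' = a • p + b • q := by rw [ha, hb]; exact cr_decomp p q p' hD
  have eq : q' = c • p + d • q := by rw [hc, hd]; exact cr_decomp p q q' hD
  have ha0 : 0 ≤ a := ha ▸ div_nonneg h2 hD.le
  have hb0 : 0 ≤ b := hb ▸ div_nonneg h1 hD.le
  have hc0 : 0 < c := hc ▸ div_pos (by rw [cr_neg_symm]; linarith) hD
  have hdet : 0 < a * d - b * c := by
    have h3 := h'.hD
    rw [ep, eq] at h3
    have : cr (a • p + b • q) (c • p + d • q) = (a * d - b * c) * cr p q := by
      simp [cr]; ring
    rw [this] at h3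
    exact pos_of_mul_pos_left h3 hD.le
  have had : 0 < a * d := by nlinarith [mul_nonneg hb0 hc0.le]
  have hap : 0 < a := lt_of_le_of_ne ha0 (by rintro rfl; simp at had)
  have hdp : 0 < d := pos_of_mul_pos_right had ha0
  have xp : g (a • p + b • q) = 1 := ep ▸ h'.hp
  have xq : g (c • p + d • q) = 1 := eq ▸ h'.hq
  obtain ⟨s1, a1, b1⟩ := h.coord hg ha0 hb0 xp
  obtain ⟨s2, c1, d1⟩ := h.coord hg hc0.le hdp.le xq
  have hr := h'.hr
  rw [ep, eq] at hr
  rcases lt_or_ge a c with hac | hac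
  ·
    have e : a • p + b • q = (b / d) • (c • p + d • q) + (a - c * b / d) • p := by
      ext <;> simp <;> field_simp <;> ring
    have hk : 0 ≤ a - c * b / d := by
      rw [sub_nonneg, div_le_iff₀ hdp]; linarith
    have hbd : b ≤ d := by
      by_contra hh; push Not at hh; nlinarith
    have := hg.comb (div_nonneg hb0 hdp.le) hk (c • p + d • q) p
    rw [← e, xp, xq, h.hp] at this
    have h4 : b / d ≤ 1 := (div_le_one hdp).2 hbd
    have h5 : c * b / d = c * (b / d) := by ring
    rw [h5] at this
    nlinarith
  rcases lt_or_ge d b with hdb | hdb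
  · have e : c • p + d • q = (c / a) • (a • p + b • q) + (d - b * c / a) • q := by
      ext <;> simp <;> field_simp <;> ring
    have hk : 0 ≤ d - b * c / a := by
      rw [sub_nonneg, div_le_iff₀ hap]; linarith
    have := hg.comb (div_nonneg hc0.le hap.le) hk (a • p + b • q) q
    rw [← e, xp, xq, h.hq] at this
    have h4 : c / a ≤ 1 := (div_le_one hap).2 hac
    have h5 : b * c / a = b * (c / a) := by ring
    rw [h5] at this
    nlinarith
  rcases le_total (a - c) (d - b) with hle | hle
  · have e : c • p + d • q - (a • p + b • q) = (a - c) • (q - p) + (d - b - (a - c)) • q := by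
      module
    have := hg.comb (sub_nonneg.2 hac) (sub_nonneg.2 hle) (q - p) q
    rw [← e, hr, h.hr, h.hq] at this
    have hd1 : d = 1 := by linarith
    have hb1 : b = 0 := by linarith
    have e2 : (1 + c) • q = c • (q - p) + (1:ℝ) • (c • p + d • q) := by
      rw [hd1]; module
    have := hg.comb_lt hc0 one_pos (q - p) (c • p + d • q) (by
      rw [hd1]
      have : cr (q - p) (c • p + (1:ℝ) • q) = -((1 + c) * cr p q) := by simp [cr]; ring
      rw [this]
      have : 0 < (1 + c) * cr p q := by positivity
      linarith)
    rw [← e2, hg.smul, h.hq, h.hr, xq, abs_of_pos (by linarith)] at this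
    linarith
  · have e : c • p + d • q - (a • p + b • q) = (d - b) • (q - p) + (a - c - (d - b)) • (-p) := by
      module
    have := hg.comb (sub_nonneg.2 hdb) (sub_nonneg.2 hle) (q - p) (-p)
    rw [← e, hr, h.hr, hg.neg, h.hp] at this
    linarith

lemma unique (hg : PNorm g) {q' : ℝ × ℝ} (h : Hex g p q) (h' : Hex g p q') : q = q' := by
  have h1 := h.mono hg h' (by rw [cr_self]) h.hD.le
  have h2 := h'.mono hg h (by rw [cr_self]) h'.hD.le
  have h3 : cr q q' = 0 := by rw [cr_neg_symm] at h2; linarith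
  have e := cr_decomp p q q' h.hD
  have : cr q' q = 0 := by rw [cr_neg_symm]; linarith
  rw [this, zero_div, zero_smul, zero_add] at e
  have hpos : 0 < cr p q' / cr p q := div_pos h'.hD h.hD
  have h4 := h'.hq
  rw [e, hg.smul, h.hq, abs_of_pos hpos, mul_one] at h4
  rw [h4, one_smul] at e
  exact e.symm

end Hex

lemma not_parallel {g : ℝ × ℝ → ℝ} (hg : PNorm g) {p q : ℝ × ℝ} (hp : p ≠ 0) (h1 : g q = g p)
    (h2 : g (q - p) = g p) : cr p q ≠ 0 := by
  intro h
  have hv : 0 < cr p (-p.2, p.1) := by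
    have : cr p (-p.2, p.1) = p.1 ^ 2 + p.2 ^ 2 := by simp [cr]; ring
    rw [this]
    by_contra hh
    apply hp
    have a1 : p.1 = 0 := by nlinarith [sq_nonneg p.1, sq_nonneg p.2]
    have a2 : p.2 = 0 := by nlinarith [sq_nonneg p.1, sq_nonneg p.2]
    exact Prod.ext a1 a2
  have e := cr_decomp p _ q hv
  rw [h, zero_div, zero_smul, add_zero] at e
  set t := cr q (-p.2, p.1) / cr p (-p.2, p.1)
  have hgp := hg.pos p hp
  rw [e, hg.smul] at h1
  have e2 : t • p - p = (t - 1) • p := by module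
  rw [e, e2, hg.smul] at h2
  have t1 : |t| = 1 := by
    have : (|t| - 1) * g p = 0 := by linarith
    rcases mul_eq_zero.1 this with h | h <;> linarith
  have t2 : |t - 1| = 1 := by
    have : (|t - 1| - 1) * g p = 0 := by linarith
    rcases mul_eq_zero.1 this with h | h <;> linarith
  rcases abs_eq (zero_le_one' ℝ) |>.1 t1 with h | h <;> rw [h] at t2 <;> norm_num at t2

lemma exists_hexS {g : ℝ × ℝ → ℝ} (hg : PNorm g) {p : ℝ × ℝ} (hp : p ≠ 0) :
    ∃ q, g q = g p ∧ g (q - p) = g p ∧ 0 < cr p q := by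
  have hgp := hg.pos p hp
  set v : ℝ × ℝ := (-p.2, p.1) with hv'
  have hcv : cr p v = p.1 ^ 2 + p.2 ^ 2 := by simp [cr, v]; ring
  have hv : 0 < cr p v := by
    rw [hcv]
    by_contra hh
    apply hp
    have a1 : p.1 = 0 := by nlinarith [sq_nonneg p.1, sq_nonneg p.2]
    have a2 : p.2 = 0 := by nlinarith [sq_nonneg p.1, sq_nonneg p.2]
    exact Prod.ext a1 a2
  set w : ℝ → ℝ × ℝ := fun θ => Real.cos θ • p + Real.sin θ • v with hw
  have hw0 : ∀ θ, w θ ≠ 0 := by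
    intro θ h0
    have h1 : cr p (w θ) = Real.sin θ * cr p v := by
      simp only [hw, cr_add_right, cr_smul_right, cr_self]; ring
    have h2 : cr (w θ) v = Real.cos θ * cr p v := by
      simp only [hw, cr_add_left, cr_smul_left, cr_self]; ring
    rw [h0] at h1 h2
    have h3 : cr p 0 = 0 := by simp [cr]
    have h4 : cr 0 v = 0 := by simp [cr]
    rw [h3] at h1
    rw [h4] at h2
    have s0 : Real.sin θ = 0 := by
      rcases mul_eq_zero.1 h1.symm with h | h
      · exact h
      · linarith
    have c0 : Real.cos θ = 0 := by
      rcases mul_eq_zero.1 h2.symm with h | h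
      · exact h
      · linarith
    have := Real.sin_sq_add_cos_sq θ
    rw [s0, c0] at this
    norm_num at this
  have hwc : Continuous w := by fun_prop
  set Q : ℝ → ℝ × ℝ := fun θ => (g p / g (w θ)) • w θ with hQ
  have hQc : Continuous Q := by
    have h1 : Continuous fun θ => g p / g (w θ) :=
      continuous_const.div (hg.cont.comp hwc) (fun θ => (hg.pos _ (hw0 θ)).ne')
    exact h1.smul hwc
  have hfc : Continuous fun θ => g (Q θ - p) := hg.cont.comp (hQc.sub continuous_const)
  have q0 : Q 0 = p := by simp [hQ, hw, hgp.ne']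
  have qpi : Q Real.pi = -p := by
    simp [hQ, hw, hg.neg, hgp.ne']
  have f0 : g (Q 0 - p) = 0 := by rw [q0, sub_self, hg.zero]
  have fpi : g (Q Real.pi - p) = 2 * g p := by
    have : -p - p = (-2 : ℝ) • p := by module
    rw [qpi, this, hg.smul]; norm_num
  obtain ⟨θ, ⟨hθ0, hθ1⟩, hθ⟩ := intermediate_value_Icc Real.pi_pos.le hfc.continuousOn
    (show g p ∈ Set.Icc (g (Q 0 - p)) (g (Q Real.pi - p)) by
      rw [f0, fpi]; exact ⟨hgp.le, by linarith⟩)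
  have hgq : g (Q θ) = g p := by
    have := hg.pos _ (hw0 θ)
    simp only [hQ]
    rw [hg.smul, abs_of_pos (div_pos hgp this)]
    field_simp
  refine ⟨Q θ, hgq, hθ, ?_⟩
  have hne := not_parallel hg hp hgq hθ
  have hge : 0 ≤ cr p (Q θ) := by
    have h1 : cr p (Q θ) = g p / g (w θ) * (Real.sin θ * cr p v) := by
      simp only [hQ, hw, cr_add_right, cr_smul_right, cr_self]; ring
    rw [h1]
    have := Real.sin_nonneg_of_nonneg_of_le_pi hθ0 hθ1
    have := hg.pos _ (hw0 θ)
    positivity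
  exact lt_of_le_of_ne hge hne.symm

lemma Hex.of_scaled {g : ℝ × ℝ → ℝ} (hg : PNorm g) {u q : ℝ × ℝ} (hu : 0 < g u) (h1 : g q = g u)
    (h2 : g (q - u) = g u) (h3 : 0 < cr u q) : Hex g ((g u)⁻¹ • u) ((g u)⁻¹ • q) := by
  have hi : 0 < (g u)⁻¹ := inv_pos.2 hu
  refine ⟨?_, ?_, ?_, ?_⟩
  · rw [hg.smul, abs_of_pos hi, inv_mul_cancel₀ hu.ne']
  · rw [hg.smul, abs_of_pos hi, h1, inv_mul_cancel₀ hu.ne']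
  · rw [← smul_sub, hg.smul, abs_of_pos hi, h2, inv_mul_cancel₀ hu.ne']
  · rw [cr_smul_left, cr_smul_right]; positivity

lemma mm_smul (c : ℝ) (p q P Q : ℝ × ℝ) : mm p q (c • P) (c • Q) = c * mm p q P Q := by
  simp only [mm, cr_smul_left, cr_smul_right]; ring

lemma exists_split {g : ℝ × ℝ → ℝ} (hg : PNorm g) {p q p' q' : ℝ × ℝ} (h : Hex g p q)
    (h' : Hex g p' q') (hc : 0 ≤ cr p' q) (hm : mm p q p' q' ≤ cr p q)
    (hm' : mm p q p' q' ≤ cr p' q') :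
    ∃ P Q, Hex g P Q ∧ (∃ α β : ℝ, 0 ≤ α ∧ 0 ≤ β ∧ P = α • p + β • p') ∧
      mm p' q' P Q = mm p q P Q := by
  obtain ⟨c, hc0, hcb⟩ := hg.bdd
  set u : ℝ → ℝ × ℝ := fun x => (1 - x) • p + x • p' with hu
  have huc : Continuous u := by fun_prop
  have hu0 : ∀ x ∈ Set.Icc (0:ℝ) 1, u x ≠ 0 := by
    rintro x ⟨hx0, hx1⟩ h0
    rcases eq_or_lt_of_le hx1 with rfl | hlt
    · simp [hu] at h0
      have := h'.hp
      rw [h0, hg.zero] at this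
      norm_num at this
    · have h1 : cr (u x) q = (1 - x) * cr p q + x * cr p' q := by
        simp only [hu, cr_add_left, cr_smul_left]
      rw [h0] at h1
      have h4 : cr 0 q = 0 := by simp [cr]
      rw [h4] at h1
      have := mul_pos (sub_pos.2 hlt) h.hD
      have := mul_nonneg hx0 hc
      linarith
  have hu1 : ∀ x ∈ Set.Icc (0:ℝ) 1, g (u x) ≤ 1 := by
    rintro x ⟨hx0, hx1⟩
    have := hg.comb (sub_nonneg.2 hx1) hx0 p p'
    rw [h.hp, h'.hp] at this
    simp only [hu]; linarith
  let E : ℝ × (ℝ × ℝ) → ℝ := fun z => mm p' q' (u z.1) z.2 - mm p q (u z.1) z.2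
  have hEc : Continuous E := by
    simp only [E, mm, cr]; fun_prop
  let S : Set (ℝ × (ℝ × ℝ)) := {z | z.1 ∈ Set.Icc (0:ℝ) 1 ∧ g z.2 = g (u z.1) ∧
    g (z.2 - u z.1) = g (u z.1) ∧ 0 ≤ cr (u z.1) z.2}
  have hSclosed : IsClosed S := by
    have hgc := hg.cont
    have h1 : IsClosed {z : ℝ × (ℝ × ℝ) | z.1 ∈ Set.Icc (0:ℝ) 1} :=
      isClosed_Icc.preimage continuous_fst
    have h2 : IsClosed {z : ℝ × (ℝ × ℝ) | g z.2 = g (u z.1)} :=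
      isClosed_eq (by fun_prop) (by fun_prop)
    have h3 : IsClosed {z : ℝ × (ℝ × ℝ) | g (z.2 - u z.1) = g (u z.1)} :=
      isClosed_eq (by fun_prop) (by fun_prop)
    have h4 : IsClosed {z : ℝ × (ℝ × ℝ) | 0 ≤ cr (u z.1) z.2} :=
      isClosed_le continuous_const (by simp only [cr]; fun_prop)
    exact h1.inter (h2.inter (h3.inter h4))
  have hScomp : IsCompact S := by
    refine ((isCompact_Icc (a := (0:ℝ)) (b := 1)).prod (isCompact_closedBall (0 : ℝ × ℝ) (1 / c))).of_isClosed_subset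
      hSclosed ?_
    rintro ⟨x, y⟩ ⟨hx, h2, -, -⟩
    refine ⟨hx, ?_⟩
    simp only [Metric.mem_closedBall, dist_zero_right]
    rw [le_div_iff₀ hc0]
    have := hcb y
    have := hu1 x hx
    simp only at h2
    linarith
  let A : Set ℝ := Prod.fst '' (S ∩ {z | E z ≤ 0})
  let B : Set ℝ := Prod.fst '' (S ∩ {z | 0 ≤ E z})
  have hA : IsClosed A := ((hScomp.inter_right
    (isClosed_le hEc continuous_const)).image continuous_fst).isClosed
  have hB : IsClosed B := ((hScomp.inter_right
    (isClosed_le continuous_const hEc)).image continuous_fst).isClosed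
  have hcov : Set.Icc (0:ℝ) 1 ⊆ A ∪ B := by
    intro x hx
    obtain ⟨q1, a1, a2, a3⟩ := exists_hexS hg (hu0 x hx)
    have hS : (x, q1) ∈ S := ⟨hx, a1, a2, a3.le⟩
    rcases le_total (E (x, q1)) 0 with he | he
    · exact Or.inl ⟨_, ⟨hS, he⟩, rfl⟩
    · exact Or.inr ⟨_, ⟨hS, he⟩, rfl⟩
  have hA0 : (Set.Icc (0:ℝ) 1 ∩ A).Nonempty := by
    have u0 : u 0 = p := by simp [hu]
    refine ⟨0, by simp, ⟨(0, q), ⟨⟨by simp, ?_, ?_, ?_⟩, ?_⟩, rfl⟩⟩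
    · simp only [u0]; rw [h.hp, h.hq]
    · simp only [u0]; rw [h.hp, h.hr]
    · simp only [u0]; exact h.hD.le
    · simp only [E, u0, Set.mem_ofPred_eq]
      simp only [mm] at hm ⊢
      linarith
  have hB0 : (Set.Icc (0:ℝ) 1 ∩ B).Nonempty := by
    have u0 : u 1 = p' := by simp [hu]
    refine ⟨1, by simp, ⟨(1, q'), ⟨⟨by simp, ?_, ?_, ?_⟩, ?_⟩, rfl⟩⟩
    · simp only [u0]; rw [h'.hp, h'.hq]
    · simp only [u0]; rw [h'.hp, h'.hr]
    · simp only [u0]; exact h'.hD.le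
    · simp only [E, u0, Set.mem_ofPred_eq]
      simp only [mm] at hm' ⊢
      linarith
  obtain ⟨x, hx, ⟨⟨x1, q1⟩, ⟨⟨-, a1, a2, a3⟩, a4⟩, rfl⟩, ⟨⟨x2, q2⟩, ⟨⟨-, b1, b2, b3⟩, b4⟩, hx12⟩⟩ :=
    isPreconnected_closed_iff.1 isPreconnected_Icc A B hA hB hcov hA0 hB0
  simp only at hx12 hx
  subst hx12
  simp only at a1 a2 a3 b1 b2 b3
  have hux := hu0 x2 hx
  have hgu := hg.pos _ hux
  have a3' := lt_of_le_of_ne a3 (not_parallel hg hux a1 a2).symm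
  have b3' := lt_of_le_of_ne b3 (not_parallel hg hux b1 b2).symm
  have H1 := Hex.of_scaled hg hgu a1 a2 a3'
  have H2 := Hex.of_scaled hg hgu b1 b2 b3'
  have he := H1.unique hg H2
  have hqq : q1 = q2 := by
    have := smul_right_injective (ℝ × ℝ) (inv_ne_zero hgu.ne')
    exact this he
  subst hqq
  refine ⟨_, _, H1, ⟨(g (u x2))⁻¹ * (1 - x2), (g (u x2))⁻¹ * x2, ?_, ?_, ?_⟩, ?_⟩
  · exact mul_nonneg (inv_nonneg.2 hgu.le) (by linarith [hx.2])
  · exact mul_nonneg (inv_nonneg.2 hgu.le) hx.1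
  · simp only [hu]; module
  · rw [mm_smul, mm_smul]
    have : E (x2, q1) = 0 := le_antisymm a4 b4
    simp only [E] at this
    rw [sub_eq_zero.1 this]

lemma cone_of {g : ℝ × ℝ → ℝ} (hg : PNorm g) {A B M R : ℝ × ℝ} (hA : g A = 1) (hB : g B = 1)
    (h1 : 0 ≤ cr A M) (h2 : 0 ≤ cr M B) (h3 : 0 ≤ cr A B)
    (h4 : 0 < cr A R) (h5 : 0 ≤ cr M R) (h6 : 0 ≤ cr B R) :
    ∃ α β : ℝ, 0 ≤ α ∧ 0 ≤ β ∧ M = α • A + β • B := by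
  rcases eq_or_lt_of_le h3 with h | h
  · have eB := cr_decomp A R B h4
    rw [← h, zero_div, zero_smul, add_zero] at eB
    have hb : B = A := by
      have h7 : 0 ≤ cr B R / cr A R := div_nonneg h6 h4.le
      have h8 := hB
      rw [eB, hg.smul, hA, abs_of_nonneg h7, mul_one] at h8
      rw [h8, one_smul] at eB
      exact eB
    rw [hb] at h2
    have h9 : cr A M = 0 := by rw [cr_neg_symm] at h2; linarith
    have eM := cr_decomp A R M h4
    rw [h9, zero_div, zero_smul, add_zero] at eM
    exact ⟨_, 0, div_nonneg h5 h4.le, le_rfl, by rw [zero_smul, add_zero]; exact eM⟩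
  · exact ⟨_, _, div_nonneg h2 h.le, div_nonneg h1 h.le, cr_decomp A B M h⟩

lemma t_nonneg {g : ℝ × ℝ → ℝ} (hg : PNorm g) {A B M : ℝ × ℝ} (hA : g A = 1) (hB : g B = 1)
    (hM : g M = 1) (hAB : 0 ≤ cr A B)
    (hc : ∃ α β : ℝ, 0 ≤ α ∧ 0 ≤ β ∧ M = α • A + β • B) :
    0 ≤ cr A M + cr M B - cr A B := by
  obtain ⟨α, β, ha, hb, rfl⟩ := hc
  have := hg.comb ha hb A B
  rw [hM, hA, hB] at this
  have e : cr A (α • A + β • B) + cr (α • A + β • B) B - cr A B = (α + β - 1) * cr A B := by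
    simp only [cr_add_left, cr_add_right, cr_smul_left, cr_smul_right, cr_self]; ring
  rw [e]
  exact mul_nonneg (by linarith) hAB

/-- `p'` follows `p` inside the cone spanned by `p` and `q`. -/
def Consec (p q p' : ℝ × ℝ) : Prop := 0 ≤ cr p p' ∧ 0 ≤ cr p' q

/-- membership in a convex cone -/
def InCone (A B M : ℝ × ℝ) : Prop := ∃ α β : ℝ, 0 ≤ α ∧ 0 ≤ β ∧ M = α • A + β • B

lemma Consec.rot {g : ℝ × ℝ → ℝ} (hg : PNorm g) {p q p' q' : ℝ × ℝ} (h : Hex g p q)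
    (h' : Hex g p' q') (hc : Consec p q p') : Consec q (q - p) q' := by
  have h1 := h.mono hg h' hc.1 hc.2
  exact ⟨h1, h'.mono hg (h.rot hg) hc.2 h1⟩

lemma split_step {g : ℝ × ℝ → ℝ} (hg : PNorm g) {p q p' q' P Q : ℝ × ℝ} (h : Hex g p q)
    (h' : Hex g p' q') (H : Hex g P Q) (hc : Consec p q p') (hP : InCone p p' P) :
    Consec p q P ∧ Consec P Q p' ∧ InCone q q' Q := by
  obtain ⟨α, β, ha, hb, e⟩ := id hP
  have c1 : Consec p q P := by
    refine ⟨?_, ?_⟩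
    · rw [e, cr_add_right, cr_smul_right, cr_smul_right, cr_self]
      have := mul_nonneg hb hc.1
      linarith
    · rw [e, cr_add_left, cr_smul_left, cr_smul_left]
      have := mul_nonneg hb hc.2
      have := mul_nonneg ha h.hD.le
      linarith
  have c2 : Consec P Q p' := by
    have hPp : 0 ≤ cr P p' := by
      rw [e, cr_add_left, cr_smul_left, cr_smul_left, cr_self]
      have := mul_nonneg ha hc.1
      linarith
    refine ⟨hPp, ?_⟩
    have hq := h.mono hg H c1.1 c1.2
    have pl := cr_plucker P p' q Q
    rcases eq_or_lt_of_le c1.2 with h0 | h0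
    · have h00 : cr P q = α * cr p q + β * cr p' q := by
        rw [e, cr_add_left, cr_smul_left, cr_smul_left]
      have h1 : α * cr p q = 0 := by
        have := mul_nonneg hb hc.2
        have := mul_nonneg ha h.hD.le
        linarith
      have ha0 : α = 0 := by
        rcases mul_eq_zero.1 h1 with h2 | h2
        · exact h2
        · linarith [h.hD]
      rw [ha0, zero_smul, zero_add] at e
      have h3 := H.hp
      rw [e, hg.smul, h'.hp, abs_of_nonneg hb, mul_one] at h3
      rw [h3, one_smul] at e
      rw [← e]
      exact H.hD.le
    · have : 0 ≤ cr P q * cr p' Q := by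
        have := mul_nonneg hPp hq
        have := mul_nonneg H.hD.le hc.2
        linarith
      exact nonneg_of_mul_nonneg_right this h0
  have r1 := hc.rot hg h h'
  have r2 := c1.rot hg h H
  have r3 := c2.rot hg H h'
  exact ⟨c1, c2, cone_of hg h.hq h'.hq r2.1 r3.1 r1.1 (h.rot hg).hD r2.2 r1.2⟩

/-- the unit body of a planar norm -/
def body (g : ℝ × ℝ → ℝ) : Set (ℝ × ℝ) := {x | g x ≤ 1}

/-- half-open cone between `A` and `B` -/
def cone (A B : ℝ × ℝ) : Set (ℝ × ℝ) := {x | 0 ≤ cr A x ∧ 0 < cr x B}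

/-- sector area -/
noncomputable def sec (g : ℝ × ℝ → ℝ) (A B : ℝ × ℝ) : ℝ := volume.real (body g ∩ cone A B)

lemma cont_cr_right (A : ℝ × ℝ) : Continuous fun x => cr A x := by
  unfold cr; fun_prop

lemma cont_cr_left (A : ℝ × ℝ) : Continuous fun x => cr x A := by
  unfold cr; fun_prop

lemma measurable_cone (A B : ℝ × ℝ) : MeasurableSet (cone A B) := by
  have h1 : MeasurableSet {x : ℝ × ℝ | 0 ≤ cr A x} :=
    (isClosed_le continuous_const (cont_cr_right A)).measurableSet
  have h2 : MeasurableSet {x : ℝ × ℝ | 0 < cr x B} :=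
    (isOpen_lt continuous_const (cont_cr_left B)).measurableSet
  exact h1.inter h2

lemma body_compact {g : ℝ × ℝ → ℝ} (hg : PNorm g) : IsCompact (body g) := by
  obtain ⟨c, hc0, hcb⟩ := hg.bdd
  refine (isCompact_closedBall (0 : ℝ × ℝ) (1 / c)).of_isClosed_subset
    (isClosed_le hg.cont continuous_const) ?_
  intro x hx
  simp only [Metric.mem_closedBall, dist_zero_right]
  rw [le_div_iff₀ hc0]
  have := hcb x
  have : g x ≤ 1 := hx
  linarith

lemma body_meas {g : ℝ × ℝ → ℝ} (hg : PNorm g) : MeasurableSet (body g) :=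
  (body_compact hg).isClosed.measurableSet

lemma body_sub_ne_top {g : ℝ × ℝ → ℝ} (hg : PNorm g) {s : Set (ℝ × ℝ)} (hs : s ⊆ body g) :
    volume s ≠ ⊤ :=
  ((measure_mono hs).trans_lt (body_compact hg).measure_lt_top).ne

lemma sec_superadd {g : ℝ × ℝ → ℝ} (hg : PNorm g) {A B M : ℝ × ℝ} (hM : g M = 1)
    (hc : InCone A B M) : sec g A M + sec g M B ≤ sec g A B := by
  obtain ⟨α, β, ha, hb, e⟩ := hc
  have hdisj : Disjoint (body g ∩ cone A M) (body g ∩ cone M B) := by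
    rw [Set.disjoint_left]
    rintro x ⟨-, h1, h2⟩ ⟨-, h3, h4⟩
    rw [cr_neg_symm] at h3
    linarith
  unfold sec
  rw [← measureReal_union hdisj ((body_meas hg).inter (measurable_cone _ _))
    (body_sub_ne_top hg Set.inter_subset_left) (body_sub_ne_top hg Set.inter_subset_left)]
  refine measureReal_mono ?_ (body_sub_ne_top hg Set.inter_subset_left)
  rintro x (⟨hx, h1, h2⟩ | ⟨hx, h1, h2⟩)
  · refine ⟨hx, h1, ?_⟩
    rw [e, cr_add_right, cr_smul_right, cr_smul_right, cr_neg_symm A x] at h2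
    have h3 : 0 < β * cr x B := by nlinarith [mul_nonneg ha h1]
    exact pos_of_mul_pos_right h3 hb
  · refine ⟨hx, ?_, h2⟩
    rw [e, cr_add_left, cr_smul_left, cr_smul_left, cr_neg_symm x B] at h1
    have h3 : 0 ≤ β * cr x B := mul_nonneg hb h2.le
    rcases eq_or_lt_of_le ha with h0 | h0
    · exfalso
      rw [← h0] at h1
      have : β = 0 := by
        have : β * cr x B = 0 := by linarith
        rcases mul_eq_zero.1 this with h | h
        · exact h
        · linarith
      rw [← h0, this, zero_smul, zero_smul, add_zero] at e
      rw [e, hg.zero] at hM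
      norm_num at hM
    · have : 0 ≤ α * cr A x := by linarith
      exact nonneg_of_mul_nonneg_right this h0

/-- the linear map with columns `A`, `B` -/
noncomputable def colMap (A B : ℝ × ℝ) : ℝ × ℝ →ₗ[ℝ] ℝ × ℝ :=
  Matrix.toLin (Module.Basis.finTwoProd ℝ) (Module.Basis.finTwoProd ℝ) !![A.1, B.1; A.2, B.2]

lemma colMap_apply (A B x : ℝ × ℝ) : colMap A B x = x.1 • A + x.2 • B := by
  unfold colMap
  rw [Matrix.toLin_finTwoProd_apply]
  ext <;> simp <;> ring

lemma colMap_det (A B : ℝ × ℝ) : LinearMap.det (colMap A B) = cr A B := by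
  unfold colMap
  rw [LinearMap.det_toLin, Matrix.det_fin_two_of]
  simp only [cr]; ring

lemma volume_colMap (A B : ℝ × ℝ) (s : Set (ℝ × ℝ)) :
    volume (colMap A B '' s) = ENNReal.ofReal |cr A B| * volume s := by
  rw [Measure.addHaar_image_linearMap, colMap_det]

lemma vol_triangle : volume (regionBetween (fun _ : ℝ => (0:ℝ)) (fun a => 1 - a) (Set.Ioo 0 1))
    = ENNReal.ofReal (1 / 2) := by
  rw [Measure.volume_eq_prod, volume_regionBetween_eq_integral]
  · congr 1
    have : ∫ y in Set.Ioo (0:ℝ) 1, (1 - y) = 1 / 2 := by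
      rw [← integral_Ioc_eq_integral_Ioo, ← intervalIntegral.integral_of_le zero_le_one,
        intervalIntegral.integral_sub (by simp) (by simp), integral_id]
      norm_num
    rw [← this]
    simp
  · exact (integrableOn_const (by simp))
  · exact (Continuous.integrableOn_Icc (by fun_prop)).mono_set Set.Ioo_subset_Icc_self
  · exact measurableSet_Ioo
  · intro x hx
    simpa using hx.2.le

lemma sec_ge {g : ℝ × ℝ → ℝ} (hg : PNorm g) {A B : ℝ × ℝ} (hA : g A ≤ 1) (hB : g B ≤ 1)
    (hAB : 0 ≤ cr A B) : cr A B / 2 ≤ sec g A B := by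
  rcases eq_or_lt_of_le hAB with h | h
  · rw [← h, zero_div]; exact measureReal_nonneg
  have hsub : colMap A B '' (regionBetween (fun _ : ℝ => (0:ℝ)) (fun a => 1 - a) (Set.Ioo 0 1))
      ⊆ body g ∩ cone A B := by
    rintro _ ⟨⟨a, b⟩, ⟨⟨ha0, ha1⟩, hb0, hb1⟩, rfl⟩
    simp only at ha0 ha1 hb0 hb1
    rw [colMap_apply]
    refine ⟨?_, ?_, ?_⟩
    · have := hg.comb ha0.le hb0.le A B
      have h1 := mul_le_mul_of_nonneg_left hA ha0.le
      have h2 := mul_le_mul_of_nonneg_left hB hb0.le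
      simp only [body, Set.mem_ofPred_eq]
      linarith
    · simp only [cr_add_right, cr_smul_right, cr_self]
      have := mul_nonneg hb0.le h.le
      linarith
    · simp only [cr_add_left, cr_smul_left, cr_self]
      have := mul_pos ha0 h
      linarith
  have := measureReal_mono (μ := volume) hsub (body_sub_ne_top hg Set.inter_subset_left)
  rw [measureReal_def, volume_colMap, vol_triangle, abs_of_pos h,
    ← ENNReal.ofReal_mul h.le, ENNReal.toReal_ofReal (by positivity)] at this
  unfold sec
  linarith

lemma area_ge_secs {g : ℝ × ℝ → ℝ} (hg : PNorm g) :
    2 * (sec g (1, 0) (0, 1) + sec g (0, 1) (-1, 1) + sec g (-1, 1) (-1, 0))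
      ≤ volume.real (body g) := by
  set H : Set (ℝ × ℝ) := {x | 0 < x.2 ∨ (x.2 = 0 ∧ 0 < x.1)} with hH
  have hHm : MeasurableSet H := by
    have h1 : MeasurableSet {x : ℝ × ℝ | 0 < x.2} :=
      (isOpen_lt continuous_const continuous_snd).measurableSet
    have h2 : MeasurableSet {x : ℝ × ℝ | x.2 = 0} :=
      (isClosed_eq continuous_snd continuous_const).measurableSet
    have h3 : MeasurableSet {x : ℝ × ℝ | 0 < x.1} :=
      (isOpen_lt continuous_const continuous_fst).measurableSet
    exact h1.union (h2.inter h3)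
  have fin : ∀ s : Set (ℝ × ℝ), volume (body g ∩ s) ≠ ⊤ := fun s =>
    body_sub_ne_top hg Set.inter_subset_left
  have c1 : ∀ x, x ∈ cone (1, 0) (0, 1) ↔ 0 ≤ x.2 ∧ 0 < x.1 := by
    intro x; simp [cone, cr]
  have c2 : ∀ x, x ∈ cone (0, 1) (-1, 1) ↔ x.1 ≤ 0 ∧ 0 < x.1 + x.2 := by
    intro x; simp [cone, cr]
  have c3 : ∀ x, x ∈ cone (-1, 1) (-1, 0) ↔ x.1 + x.2 ≤ 0 ∧ 0 < x.2 := by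
    intro x; simp [cone, cr]; intro _; constructor <;> intro h <;> linarith
  have h1 : sec g (1, 0) (0, 1) + sec g (0, 1) (-1, 1) + sec g (-1, 1) (-1, 0)
      ≤ volume.real (body g ∩ H) := by
    unfold sec
    rw [← measureReal_union _ ((body_meas hg).inter (measurable_cone _ _)) (fin _) (fin _),
      ← measureReal_union _ ((body_meas hg).inter (measurable_cone _ _)) _ (fin _)]
    · refine measureReal_mono ?_ (fin _)
      rintro x ((⟨hx, h⟩ | ⟨hx, h⟩) | ⟨hx, h⟩)
      · refine ⟨hx, ?_⟩
        rw [c1] at h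
        rcases eq_or_lt_of_le h.1 with h0 | h0
        · exact Or.inr ⟨h0.symm, h.2⟩
        · exact Or.inl h0
      · refine ⟨hx, Or.inl ?_⟩
        rw [c2] at h; linarith [h.1, h.2]
      · refine ⟨hx, Or.inl ?_⟩
        rw [c3] at h; exact h.2
    · rw [Set.disjoint_left]
      rintro x (⟨-, h⟩ | ⟨-, h⟩) ⟨-, h'⟩
      · rw [c1] at h; rw [c3] at h'; linarith [h.1, h.2, h'.1, h'.2]
      · rw [c2] at h; rw [c3] at h'; linarith [h.1, h.2, h'.1, h'.2]
    · rw [← Set.inter_union_distrib_left]; exact fin _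
    · rw [Set.disjoint_left]
      rintro x ⟨-, h⟩ ⟨-, h'⟩
      rw [c1] at h; rw [c2] at h'; linarith [h.1, h.2, h'.1, h'.2]
  have h2 : volume.real (-(body g ∩ H)) = volume.real (body g ∩ H) := by
    rw [measureReal_def, measureReal_def, Measure.measure_neg]
  have hsymm : -(body g ∩ H) ⊆ body g := by
    rintro x ⟨hx, -⟩
    have : g (-x) ≤ 1 := hx
    rw [hg.neg] at this
    exact this
  have h3 : volume.real (body g ∩ H) + volume.real (-(body g ∩ H)) ≤ volume.real (body g) := by
    rw [← measureReal_union _ ((body_meas hg).inter hHm).neg (fin _) (body_sub_ne_top hg hsymm)]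
    · refine measureReal_mono ?_ (body_sub_ne_top hg subset_rfl)
      exact Set.union_subset Set.inter_subset_left hsymm
    · rw [Set.disjoint_left]
      rintro x ⟨-, h⟩ ⟨-, h'⟩
      simp only [hH, Set.mem_ofPred_eq, Prod.snd_neg, Prod.fst_neg] at h h'
      rcases h with h | h <;> rcases h' with h' | h' <;> linarith [h, h']
  linarith

/-- Area of the three double sectors between two hexagons. -/
noncomputable def Phi (g : ℝ × ℝ → ℝ) (p q p' q' : ℝ × ℝ) : ℝ :=
  2 * (sec g p p' + sec g q q' + sec g (q - p) (q' - p'))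

section planar

variable {g : ℝ × ℝ → ℝ} {p q p' q' : ℝ × ℝ}

lemma consec_crs (hg : PNorm g) (h : Hex g p q) (h' : Hex g p' q') (hc : Consec p q p') :
    0 ≤ cr p p' ∧ 0 ≤ cr q q' ∧ 0 ≤ cr (q - p) (q' - p') := by
  have r1 := hc.rot hg h h'
  have r2 := r1.rot hg (h.rot hg) (h'.rot hg)
  exact ⟨hc.1, r1.1, r2.1⟩

lemma BB_nonneg (hg : PNorm g) (h : Hex g p q) (h' : Hex g p' q') (hc : Consec p q p') :
    0 ≤ BB p q p' q' := by
  obtain ⟨h1, h2, h3⟩ := consec_crs hg h h' hc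
  unfold BB; linarith

lemma BB_le_Phi (hg : PNorm g) (h : Hex g p q) (h' : Hex g p' q') (hc : Consec p q p') :
    BB p q p' q' ≤ Phi g p q p' q' := by
  obtain ⟨h1, h2, h3⟩ := consec_crs hg h h' hc
  have := sec_ge hg h.hp.le h'.hp.le h1
  have := sec_ge hg h.hq.le h'.hq.le h2
  have := sec_ge hg h.hr.le h'.hr.le h3
  unfold BB Phi; linarith

lemma split_all (hg : PNorm g) (hmin : ∀ p q, Hex g p q → 1 ≤ cr p q) (h : Hex g p q)
    (h' : Hex g p' q') (hc : Consec p q p') (hm : mm p q p' q' ≤ 1) :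
    ∃ P Q, Hex g P Q ∧ Consec p q P ∧ Consec P Q p' ∧ mm p' q' P Q = mm p q P Q ∧
      0 ≤ cr p P + cr P p' - cr p p' ∧ 0 ≤ cr q Q + cr Q q' - cr q q' ∧
      0 ≤ cr (q - p) (Q - P) + cr (Q - P) (q' - p') - cr (q - p) (q' - p') ∧
      Phi g p q P Q + Phi g P Q p' q' ≤ Phi g p q p' q' := by
  obtain ⟨P, Q, H, hcone, hX⟩ := exists_split hg h h' hc.2 (hm.trans (hmin _ _ h))
    (hm.trans (hmin _ _ h'))
  obtain ⟨c1, c2, k1⟩ := split_step hg h h' H hc hcone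
  obtain ⟨-, -, k2⟩ := split_step hg (h.rot hg) (h'.rot hg) (H.rot hg) (hc.rot hg h h') k1
  obtain ⟨h1, h2, h3⟩ := consec_crs hg h h' hc
  refine ⟨P, Q, H, c1, c2, hX, t_nonneg hg h.hp h'.hp H.hp h1 hcone,
    t_nonneg hg h.hq h'.hq H.hq h2 k1, t_nonneg hg h.hr h'.hr H.hr h3 k2, ?_⟩
  have := sec_superadd hg H.hp hcone
  have := sec_superadd hg H.hq k1
  have := sec_superadd hg H.hr k2
  unfold Phi; linarith

lemma pair_value (hg : PNorm g) (hmin : ∀ p q, Hex g p q → 1 ≤ cr p q) (h : Hex g p q)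
    (h' : Hex g p' q') (hc : Consec p q p') :
    ∃ t k : ℝ, 0 ≤ t ∧ 0 ≤ k ∧ BB p q p' q' + t ≤ Phi g p q p' q' ∧
      k ^ 2 = 12 * mm p q p' q' ^ 2 + BB p q p' q' ^ 2 - 12 * (cr p q * cr p' q') ∧
      (mm p q p' q' ≤ 1 → 12 * ((1 - mm p q p' q') ^ 2 - (cr p q - 1) * (cr p' q' - 1)) ≤
        2 * t * (BB p q p' q' + 2 * k) + t ^ 2) := by
  have hk2 := Real.sq_sqrt (nn_nonneg p q p' q')
  have hk0 := Real.sqrt_nonneg (12 * mm p q p' q' ^ 2 + BB p q p' q' ^ 2 - 12 * (cr p q * cr p' q'))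
  by_cases hm : mm p q p' q' ≤ 1
  · obtain ⟨P, Q, H, c1, c2, hX, t0, t1, t2, hPhi⟩ := split_all hg hmin h h' hc hm
    refine ⟨BB p q P Q + BB P Q p' q' - BB p q p' q', _, ?_, hk0, ?_, hk2, fun _ => ?_⟩
    · unfold BB; linarith
    · have := BB_le_Phi hg h H c1
      have := BB_le_Phi hg H h' c2
      linarith
    · have := (split_alg p q p' q' P Q hX t0 t1 t2 _ _ hk0 hk2 rfl).1
      have h1 : 0 ≤ 12 * (cr p q + cr p' q' - 2 * mm p q p' q') * (cr P Q - 1) := by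
        have := hmin _ _ h
        have := hmin _ _ h'
        have := hmin _ _ H
        exact mul_nonneg (by linarith) (by linarith)
      linarith
  · exact ⟨0, _, le_rfl, hk0, by linarith [BB_le_Phi hg h h' hc], hk2, fun h => absurd h hm⟩

lemma mm_comm (p q p' q' : ℝ × ℝ) : mm p q p' q' = mm p' q' p q := by
  unfold mm; ring

lemma half_left (hg : PNorm g) (hmin : ∀ p q, Hex g p q → 1 ≤ cr p q) (h : Hex g p q)
    (h' : Hex g p' q') (hc : Consec p q p') (σ : ℝ) (hσ : σ ≤ 2) (hm : mm p q p' q' = σ / 2)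
    (hB : BB p q p' q' = σ) (hD : cr p q = 1) : 1.7855 ≤ Phi g p q p' q' := by
  obtain ⟨P, Q, H, c1, c2, hX, t0, t1, t2, hPhi⟩ := split_all hg hmin h h' hc (by linarith)
  obtain ⟨ha, ka, ha0, ka0, hav, ka2, hag⟩ := pair_value hg hmin h H c1
  obtain ⟨hb, kb, hb0, kb0, hbv, kb2, hbg⟩ := pair_value hg hmin H h' c2
  have hk2 := Real.sq_sqrt (nn_nonneg p q p' q')
  have hk0 := Real.sqrt_nonneg (12 * mm p q p' q' ^ 2 + BB p q p' q' ^ 2 - 12 * (cr p q * cr p' q'))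
  obtain ⟨e1, e2, e3⟩ := split_alg p q p' q' P Q hX t0 t1 t2 _ _ hk0 hk2 rfl
  set k := Real.sqrt (12 * mm p q p' q' ^ 2 + BB p q p' q' ^ 2 - 12 * (cr p q * cr p' q'))
  have mX : mm P Q p' q' = mm p q P Q := by rw [mm_comm, hX]
  set gg := BB p q P Q + BB P Q p' q' - BB p q p' q' with hgg
  have hgg0 : 0 ≤ gg := by rw [hgg]; unfold BB; linarith
  have b1 := BB_nonneg hg h H c1
  have b2 := BB_nonneg hg H h' c2
  have d1 := hmin _ _ H
  have d2 := hmin _ _ h'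
  rw [hm, hB, hD] at e1 e2 e3 hk2
  rw [hD] at ka2
  rw [mX] at kb2 hbg
  have hσ0 : 0 ≤ σ := hB ▸ BB_nonneg hg h h' hc
  have hdata : HalfData σ k (cr p' q') gg (mm p q P Q) (cr P Q) (BB p q P Q) (BB P Q p' q')
      ha hb ka kb := by
    refine ⟨hk0, ?_, d2, hgg0, ?_, ?_, ?_, ?_, d1, ?_, b1, b2, ha0, hb0, ka0, kb0, ?_, ?_, ?_, ?_⟩
    · rw [hk2]; ring
    · have : 0 ≤ 12 * (1 + cr p' q' - 2 * (σ / 2)) * (cr P Q - 1) :=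
        mul_nonneg (by linarith) (by linarith)
      linarith
    · linarith
    · linarith
    · linarith
    · rw [hgg, hB]; ring
    · rw [ka2]; ring
    · rw [kb2]
    · intro hμ
      have := hag hμ
      rw [hD] at this
      linarith
    · exact hbg
  have := half_bound hdata hσ0
  linarith

lemma half_right (hg : PNorm g) (hmin : ∀ p q, Hex g p q → 1 ≤ cr p q) (h : Hex g p q)
    (h' : Hex g p' q') (hc : Consec p q p') (σ : ℝ) (hσ : σ ≤ 2) (hm : mm p q p' q' = σ / 2)
    (hB : BB p q p' q' = σ) (hD : cr p' q' = 1) : 1.7855 ≤ Phi g p q p' q' := by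
  obtain ⟨P, Q, H, c1, c2, hX, t0, t1, t2, hPhi⟩ := split_all hg hmin h h' hc (by linarith)
  obtain ⟨hb, kb, hb0, kb0, hbv, kb2, hbg⟩ := pair_value hg hmin h H c1
  obtain ⟨ha, ka, ha0, ka0, hav, ka2, hag⟩ := pair_value hg hmin H h' c2
  have hk2 := Real.sq_sqrt (nn_nonneg p q p' q')
  have hk0 := Real.sqrt_nonneg (12 * mm p q p' q' ^ 2 + BB p q p' q' ^ 2 - 12 * (cr p q * cr p' q'))
  obtain ⟨e1, e2, e3⟩ := split_alg p q p' q' P Q hX t0 t1 t2 _ _ hk0 hk2 rfl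
  set k := Real.sqrt (12 * mm p q p' q' ^ 2 + BB p q p' q' ^ 2 - 12 * (cr p q * cr p' q'))
  have mX : mm P Q p' q' = mm p q P Q := by rw [mm_comm, hX]
  set gg := BB p q P Q + BB P Q p' q' - BB p q p' q' with hgg
  have hgg0 : 0 ≤ gg := by rw [hgg]; unfold BB; linarith
  have b1 := BB_nonneg hg h H c1
  have b2 := BB_nonneg hg H h' c2
  have d1 := hmin _ _ H
  have d2 := hmin _ _ h
  rw [hm, hB, hD] at e1 e2 e3 hk2
  rw [hD, mX] at ka2
  rw [mX] at hag
  have hσ0 : 0 ≤ σ := hB ▸ BB_nonneg hg h h' hc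
  have hdata : HalfData σ k (cr p q) gg (mm p q P Q) (cr P Q) (BB P Q p' q') (BB p q P Q)
      ha hb ka kb := by
    refine ⟨hk0, ?_, d2, hgg0, ?_, ?_, ?_, ?_, d1, ?_, b2, b1, ha0, hb0, ka0, kb0, ?_, ?_, ?_, ?_⟩
    · rw [hk2]; ring
    · have : 0 ≤ 12 * (cr p q + 1 - 2 * (σ / 2)) * (cr P Q - 1) :=
        mul_nonneg (by linarith) (by linarith)
      linarith
    · linarith
    · linarith
    · linarith
    · rw [hgg, hB]; ring
    · rw [ka2]; ring
    · rw [kb2]; ring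
    · intro hμ
      have := hag hμ
      rw [hD] at this
      linarith
    · intro hμ
      have := hbg hμ
      linarith
  have := half_bound hdata hσ0
  linarith

end planar

theorem planar_area {g : ℝ × ℝ → ℝ} (hg : PNorm g) (hmin : ∀ p q, Hex g p q → 1 ≤ cr p q)
    (hI : Hex g (1, 0) (0, 1)) : 3.571 ≤ volume.real (body g) := by
  have hω : Hex g (0, 1) (-1, 1) := by
    have := hI.rot hg
    simpa using this
  have hc : Consec (1, 0) (0, 1) (0, 1) := by constructor <;> simp [cr]
  obtain ⟨P, Q, H, c1, c2, hX, -, -, -, hPhi⟩ := split_all hg hmin hI hω hc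
    (by simp [mm, cr]; norm_num)
  have hA := area_ge_secs hg
  have hA' : Phi g (1, 0) (0, 1) (0, 1) (-1, 1) ≤ volume.real (body g) := by
    unfold Phi
    have e1 : ((0:ℝ), (1:ℝ)) - (1, 0) = (-1, 1) := by simp
    have e2 : ((-1:ℝ), (1:ℝ)) - (0, 1) = (-1, 0) := by simp
    rw [e1, e2]
    exact hA
  obtain ⟨a, b⟩ := P
  obtain ⟨c, d⟩ := Q
  have hd : d = b - c := by
    simp [mm, cr] at hX
    linarith
  have m1 : mm (1, 0) (0, 1) (a, b) (c, d) = (a + d) / 2 := by simp [mm, cr]; ring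
  have m2 : mm (a, b) (c, d) (0, 1) (-1, 1) = (a + d) / 2 := by
    simp [mm, cr]; rw [hd]; ring
  have b1 : BB (1, 0) (0, 1) (a, b) (c, d) = a + d := by
    simp [BB, cr]; rw [hd]; ring
  have b2 : BB (a, b) (c, d) (0, 1) (-1, 1) = a + d := by
    simp [BB, cr]; rw [hd]; ring
  rcases le_or_gt (a + d) 2 with hs | hs
  · have := half_left hg hmin hI H c1 (a + d) hs m1 b1 (by simp [cr])
    have := half_right hg hmin H hω c2 (a + d) hs m2 b2 (by simp [cr])
    linarith
  · have := BB_le_Phi hg hI H c1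
    have := BB_le_Phi hg H hω c2
    linarith

/-- the segment from `0` to `a • d` -/
def seg (a : ℝ) (d : ℝ × ℝ) : Set (ℝ × ℝ) := (fun τ : ℝ => τ • d) '' Set.Icc 0 a

lemma seg_compact (a : ℝ) (d : ℝ × ℝ) : IsCompact (seg a d) :=
  isCompact_Icc.image (by fun_prop)

lemma seg_convex (a : ℝ) (d : ℝ × ℝ) : Convex ℝ (seg a d) := by
  have := (convex_Icc (0:ℝ) a).linear_image (LinearMap.toSpanSingleton ℝ (ℝ × ℝ) d)
  exact this

lemma seg_area_x {M : Set (ℝ × ℝ)} (hM : IsCompact M) (hc : Convex ℝ M) {u v : ℝ × ℝ} (hu : u ∈ M)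
    (hv : v ∈ M) {a : ℝ} (ha : 0 ≤ a) :
    volume M + ENNReal.ofReal (a * (v.2 - u.2)) ≤ volume (M + seg a (1, 0)) := by
  rcases le_total v.2 u.2 with hle | huv
  · rw [ENNReal.ofReal_of_nonpos (mul_nonpos_of_nonneg_of_nonpos ha (by linarith)), add_zero]
    refine measure_mono ?_
    intro x hx
    exact ⟨x, hx, 0, ⟨0, ⟨le_rfl, ha⟩, by simp⟩, by simp⟩
  have hM' : IsCompact (M + seg a (1, 0)) := hM.add (seg_compact _ _)
  rw [Measure.volume_eq_prod, Measure.prod_apply_symm hM.isClosed.measurableSet,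
    Measure.prod_apply_symm hM'.isClosed.measurableSet]
  have hind : ENNReal.ofReal (a * (v.2 - u.2))
      = ∫⁻ y, (Set.Icc u.2 v.2).indicator (fun _ => ENNReal.ofReal a) y := by
    rw [lintegral_indicator measurableSet_Icc, setLIntegral_const, Real.volume_Icc,
      ENNReal.ofReal_mul ha]
  rw [hind, ← lintegral_add_right _ (measurable_const.indicator measurableSet_Icc)]
  refine lintegral_mono fun y => ?_
  have hsub : (fun x => (x, y)) ⁻¹' M ⊆ (fun x => (x, y)) ⁻¹' (M + seg a (1, 0)) := by
    intro x hx
    exact ⟨(x, y), hx, 0, ⟨0, ⟨le_rfl, ha⟩, by simp⟩, by simp⟩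
  by_cases hy : y ∈ Set.Icc u.2 v.2
  · rw [Set.indicator_of_mem hy]
    have hne : ((fun x : ℝ => (x, y)) ⁻¹' M).Nonempty := by
      rcases eq_or_lt_of_le huv with h0 | h0
      · have : y = u.2 := le_antisymm (by rw [h0]; exact hy.2) hy.1
        exact ⟨u.1, by simpa [this] using hu⟩
      · have h1 : 0 < v.2 - u.2 := by linarith
        have := hc hu hv (a := (v.2 - y) / (v.2 - u.2)) (b := (y - u.2) / (v.2 - u.2))
          (div_nonneg (by linarith [hy.2]) h1.le) (div_nonneg (by linarith [hy.1]) h1.le)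
          (by field_simp; ring)
        refine ⟨((v.2 - y) / (v.2 - u.2)) * u.1 + ((y - u.2) / (v.2 - u.2)) * v.1, ?_⟩
        have e : (((v.2 - y) / (v.2 - u.2)) * u.1 + ((y - u.2) / (v.2 - u.2)) * v.1, y)
          = ((v.2 - y) / (v.2 - u.2)) • u + ((y - u.2) / (v.2 - u.2)) • v := by
          ext
          · simp
          · simp; field_simp; ring
        rw [Set.mem_preimage, e]
        exact this
    have hcl : IsClosed ((fun x : ℝ => (x, y)) ⁻¹' M) := hM.isClosed.preimage (by fun_prop)
    have hcomp : IsCompact ((fun x : ℝ => (x, y)) ⁻¹' M) := by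
      refine (hM.image continuous_fst).of_isClosed_subset hcl ?_
      intro x hx
      exact ⟨_, hx, rfl⟩
    obtain ⟨b, hb, hbmax⟩ := hcomp.exists_isGreatest hne
    have hdisj : Disjoint ((fun x : ℝ => (x, y)) ⁻¹' M) (Set.Ioc b (b + a)) := by
      rw [Set.disjoint_left]
      intro x hx hx'
      exact absurd (hbmax hx) (not_le.2 hx'.1)
    have e : ENNReal.ofReal a = volume (Set.Ioc b (b + a)) := by
      rw [Real.volume_Ioc]; congr 1; ring
    rw [e, ← measure_union hdisj measurableSet_Ioc]
    refine measure_mono (Set.union_subset hsub ?_)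
    intro x hx
    refine ⟨(b, y), hb, (x - b, 0), ⟨x - b, ⟨by linarith [hx.1], by linarith [hx.2]⟩, by simp⟩, ?_⟩
    simp
  · rw [Set.indicator_of_notMem hy, add_zero]
    exact measure_mono hsub

lemma seg_area {M : Set (ℝ × ℝ)} (hM : IsCompact M) (hc : Convex ℝ M) {u v : ℝ × ℝ} (hu : u ∈ M)
    (hv : v ∈ M) {a : ℝ} (ha : 0 ≤ a) (d e : ℝ × ℝ) (hde : cr d e = 1) :
    volume M + ENNReal.ofReal (a * (cr d v - cr d u)) ≤ volume (M + seg a d) := by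
  have inv : ∀ x : ℝ × ℝ, colMap d e (cr x e, cr d x) = x := by
    intro x
    rw [colMap_apply]
    have := cr_decomp d e x (by rw [hde]; norm_num)
    rw [hde, div_one, div_one] at this
    exact this.symm
  have inv2 : ∀ x y : ℝ, (cr (colMap d e (x, y)) e, cr d (colMap d e (x, y))) = (x, y) := by
    intro x y
    rw [colMap_apply]
    simp only [cr_add_left, cr_add_right, cr_smul_left, cr_smul_right, cr_self, hde]
    simp
  let f : ℝ × ℝ →ₗ[ℝ] ℝ × ℝ :=
    { toFun := fun x => (cr x e, cr d x)
      map_add' := by intro x y; simp only [cr_add_left, cr_add_right]; rfl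
      map_smul' := by intro t y; simp only [cr_smul_left, cr_smul_right]; rfl }
  have hfc : Continuous f := by
    have := f.continuous_of_finiteDimensional
    exact this
  have himg : ∀ s, volume (f '' s) = volume s := by
    intro s
    have h1 : colMap d e '' (f '' s) = s := by
      rw [← Set.image_comp]
      have : (colMap d e ∘ f) = id := by
        funext x; exact inv x
      rw [this, Set.image_id]
    have := volume_colMap d e (f '' s)
    rw [h1, hde] at this
    simpa using this.symm
  have key := seg_area_x (hM.image hfc) (hc.linear_image f) (Set.mem_image_of_mem f hu)
    (Set.mem_image_of_mem f hv) ha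
  rw [himg] at key
  have h2 : f '' M + seg a (1, 0) = f '' (M + seg a d) := by
    have hs : seg a (1, 0) = f '' seg a d := by
      unfold seg
      rw [← Set.image_comp]
      congr 1
      funext τ
      simp only [f, Function.comp, LinearMap.coe_mk, AddHom.coe_mk, cr_smul_left, cr_smul_right,
        cr_self, hde]
      simp
    rw [hs, ← Set.image_add f]
  rw [h2, himg] at key
  exact key

/-- integer translate -/
def zt (x : ℝ × ℝ) (m n : ℤ) : ℝ × ℝ := (x.1 + m, x.2 + n)

lemma cover_area {L : Set (ℝ × ℝ)} (hm : MeasurableSet L) (hL : ∀ x, ∃ m n : ℤ, zt x m n ∈ L) :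
    1 ≤ volume L := by
  let U : Set (ℝ × ℝ) := Set.Ico 0 1 ×ˢ Set.Ico 0 1
  have hU : volume U = 1 := by
    simp only [U]
    rw [Measure.volume_eq_prod, Measure.prod_prod]; simp
  have hUm : MeasurableSet U := measurableSet_Ico.prod measurableSet_Ico
  let T : ℤ × ℤ → ℝ × ℝ → ℝ × ℝ := fun z x => ((z.1 : ℝ), (z.2 : ℝ)) + x
  have hcov : U ⊆ ⋃ z : ℤ × ℤ, (U ∩ (T z) ⁻¹' L) := by
    intro x hx
    obtain ⟨m, n, h⟩ := hL x
    rw [Set.mem_iUnion]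
    refine ⟨(m, n), hx, ?_⟩
    have : T (m, n) x = zt x m n := by
      simp only [T, zt]; ext <;> simp [add_comm]
    rw [Set.mem_preimage, this]; exact h
  have h1 : (1 : ENNReal) ≤ ∑' z : ℤ × ℤ, volume (U ∩ (T z) ⁻¹' L) := by
    rw [← hU]; exact (measure_mono hcov).trans (measure_iUnion_le _)
  have hTm : ∀ z, MeasurePreserving (T z) volume volume := fun z =>
    measurePreserving_add_left volume _
  have h2 : ∀ z, volume (U ∩ (T z) ⁻¹' L) = volume ((T (-z)) ⁻¹' U ∩ L) := by
    intro z
    have hpre : (U ∩ (T z) ⁻¹' L) = (T z) ⁻¹' ((T (-z)) ⁻¹' U ∩ L) := by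
      ext x
      have : T (-z) (T z x) = x := by simp only [T]; ext <;> simp
      simp only [Set.mem_inter_iff, Set.mem_preimage, this]
    rw [hpre, (hTm z).measure_preimage (((hTm (-z)).measurable hUm).inter hm).nullMeasurableSet]
  have h3 : ∑' z : ℤ × ℤ, volume ((T (-z)) ⁻¹' U ∩ L) = volume (⋃ z, (T (-z)) ⁻¹' U ∩ L) := by
    rw [measure_iUnion]
    · intro z w hzw
      rw [Function.onFun, Set.disjoint_left]
      rintro x ⟨⟨⟨a1, a2⟩, a3, a4⟩, -⟩ ⟨⟨⟨b1, b2⟩, b3, b4⟩, -⟩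
      apply hzw
      simp only [T, Prod.fst_add, Prod.snd_add, Prod.fst_neg, Prod.snd_neg, Int.cast_neg]
        at a1 a2 a3 a4 b1 b2 b3 b4
      have e1 : z.1 = w.1 := by
        have c1 : ((z.1 : ℤ) : ℝ) < w.1 + 1 := by linarith
        have c2 : ((w.1 : ℤ) : ℝ) < z.1 + 1 := by linarith
        have c1' : z.1 < w.1 + 1 := by exact_mod_cast c1
        have c2' : w.1 < z.1 + 1 := by exact_mod_cast c2
        omega
      have e2 : z.2 = w.2 := by
        have c1 : ((z.2 : ℤ) : ℝ) < w.2 + 1 := by linarith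
        have c2 : ((w.2 : ℤ) : ℝ) < z.2 + 1 := by linarith
        have c1' : z.2 < w.2 + 1 := by exact_mod_cast c1
        have c2' : w.2 < z.2 + 1 := by exact_mod_cast c2
        omega
      exact Prod.ext e1 e2
    · intro z
      exact ((hTm (-z)).measurable hUm).inter hm
  calc (1 : ENNReal) ≤ ∑' z : ℤ × ℤ, volume (U ∩ (T z) ⁻¹' L) := h1
    _ = ∑' z : ℤ × ℤ, volume ((T (-z)) ⁻¹' U ∩ L) := by simp_rw [h2]
    _ = volume (⋃ z, (T (-z)) ⁻¹' U ∩ L) := h3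
    _ ≤ volume L := measure_mono (Set.iUnion_subset fun z => Set.inter_subset_right)

lemma one_le_of_cover1 {x0 X : ℝ} (h : ∀ ξ : ℝ, ∃ m : ℤ, x0 ≤ ξ + m ∧ ξ + m ≤ x0 + X) : 1 ≤ X := by
  by_contra hX
  push Not at hX
  obtain ⟨m, h1, h2⟩ := h (x0 + (X + 1) / 2)
  have a1 : ((m : ℤ) : ℝ) < 0 := by linarith
  have a2 : (-1 : ℝ) < (m : ℤ) := by linarith
  have a1' : m < 0 := by exact_mod_cast a1
  have a2' : -1 < m := by exact_mod_cast a2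
  omega

lemma cover_width {L : Set (ℝ × ℝ)} (hL : ∀ x, ∃ m n : ℤ, zt x m n ∈ L) {x0 X y0 Y s0 S : ℝ}
    (hx : ∀ z ∈ L, x0 ≤ z.1 ∧ z.1 ≤ x0 + X) (hy : ∀ z ∈ L, y0 ≤ z.2 ∧ z.2 ≤ y0 + Y)
    (hs : ∀ z ∈ L, s0 ≤ z.1 + z.2 ∧ z.1 + z.2 ≤ s0 + S) : 4 ≤ X + Y + S := by
  have hX : 1 ≤ X := one_le_of_cover1 (x0 := x0) (fun ξ => by
    obtain ⟨m, n, h⟩ := hL (ξ, 0)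
    exact ⟨m, hx _ h⟩)
  have hY : 1 ≤ Y := one_le_of_cover1 (x0 := y0) (fun ξ => by
    obtain ⟨m, n, h⟩ := hL (0, ξ)
    exact ⟨n, hy _ h⟩)
  have hS : 1 ≤ S := one_le_of_cover1 (x0 := s0) (fun ξ => by
    obtain ⟨m, n, h⟩ := hL (ξ, 0)
    refine ⟨m + n, ?_⟩
    have := hs _ h
    simp only [zt] at this
    push_cast
    constructor <;> linarith [this.1, this.2])
  by_contra hlt
  push Not at hlt
  have uniq : ∀ (α X : ℝ) (m : ℤ), X - 1 < α → α < 1 → 0 ≤ α + m → α + m ≤ X → m = 0 := by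
    intro α X m h1 h2 h3 h4
    have a1 : ((m : ℤ) : ℝ) < 1 := by linarith
    have a2 : (-1 : ℝ) < (m : ℤ) := by linarith
    have a1' : m < 1 := by exact_mod_cast a1
    have a2' : -1 < m := by exact_mod_cast a2
    omega
  have force : ∀ α β : ℝ, X - 1 < α → α < 1 → Y - 1 < β → β < 1 →
      s0 ≤ x0 + y0 + α + β ∧ x0 + y0 + α + β ≤ s0 + S := by
    intro α β h1 h2 h3 h4
    obtain ⟨m, n, h⟩ := hL (x0 + α, y0 + β)
    have a := hx _ h
    have b := hy _ h
    have c := hs _ h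
    simp only [zt] at a b c
    have m0 := uniq α X m h1 h2 (by linarith [a.1]) (by linarith [a.2])
    have n0 := uniq β Y n h3 h4 (by linarith [b.1]) (by linarith [b.2])
    subst m0 n0
    simp only [Int.cast_zero] at c
    constructor <;> linarith [c.1, c.2]
  obtain ⟨ε, hε0, hε1, hε2, hε3⟩ : ∃ ε : ℝ, 0 < ε ∧ ε < 2 - X ∧ ε < 2 - Y ∧
      4 * ε < 4 - (X + Y + S) := by
    refine ⟨(4 - (X + Y + S)) / 5, by linarith, by linarith, by linarith, by linarith⟩
  have f1 := force (1 - ε) (1 - ε) (by linarith) (by linarith) (by linarith) (by linarith)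
  have f2 := force (X - 1 + ε) (Y - 1 + ε) (by linarith) (by linarith) (by linarith) (by linarith)
  linarith [f1.2, f2.1]

lemma Hex.coord_le {g : ℝ × ℝ → ℝ} {p q : ℝ × ℝ} (hg : PNorm g) (h : Hex g p q) {a b : ℝ}
    (ha : 0 ≤ a) (hb : 0 ≤ b) :
    g (a • p + b • q) ≤ a + b ∧ a ≤ g (a • p + b • q) ∧ b ≤ g (a • p + b • q) := by
  have h1 : g (a • p + b • q) ≤ a + b := by
    have := hg.comb ha hb p q
    rw [h.hp, h.hq] at this; linarith
  have e1 : (a + b) • p = (1:ℝ) • (a • p + b • q) + b • (-(q - p)) := by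
    module
  have e2 : (a + b) • q = (1:ℝ) • (a • p + b • q) + a • (q - p) := by
    module
  have f1 := hg.comb zero_le_one hb (a • p + b • q) (-(q - p))
  have f2 := hg.comb zero_le_one ha (a • p + b • q) (q - p)
  rw [← e1, hg.smul, hg.neg, abs_of_nonneg (by linarith), h.hp, h.hr] at f1
  rw [← e2, hg.smul, abs_of_nonneg (by linarith), h.hq, h.hr] at f2
  refine ⟨h1, by linarith, by linarith⟩

lemma hex_std_aux {g : ℝ × ℝ → ℝ} (hg : PNorm g) (hI : Hex g (1, 0) (0, 1)) (x : ℝ × ℝ)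
    (h2 : 0 ≤ x.2) :
    (0 ≤ x.1 ∧ g x ≤ x.1 + x.2 ∧ x.1 ≤ g x ∧ x.2 ≤ g x) ∨
    (x.1 ≤ 0 ∧ 0 ≤ x.1 + x.2 ∧ g x ≤ x.2 ∧ x.1 + x.2 ≤ g x ∧ - x.1 ≤ g x) ∨
    (x.1 ≤ 0 ∧ x.1 + x.2 ≤ 0 ∧ g x ≤ - x.1 ∧ x.2 ≤ g x ∧ -(x.1 + x.2) ≤ g x) := by
  rcases le_total 0 x.1 with h1 | h1
  · left
    have := hI.coord_le hg h1 h2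
    have e : x.1 • ((1:ℝ), (0:ℝ)) + x.2 • ((0:ℝ), (1:ℝ)) = x := by ext <;> simp
    rw [e] at this
    exact ⟨h1, this⟩
  · right
    rcases le_total 0 (x.1 + x.2) with h3 | h3
    · left
      have := (hI.rot hg).coord_le hg h3 (neg_nonneg.2 h1)
      have e : (x.1 + x.2) • ((0:ℝ), (1:ℝ)) + (-x.1) • (((0:ℝ), (1:ℝ)) - ((1:ℝ), (0:ℝ))) = x := by
        ext <;> simp
      rw [e] at this
      exact ⟨h1, h3, by linarith [this.1], this.2⟩
    · right
      have := ((hI.rot hg).rot hg).coord_le hg h2 (neg_nonneg.2 h3)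
      have e : x.2 • (((0:ℝ), (1:ℝ)) - ((1:ℝ), (0:ℝ))) + (-(x.1 + x.2)) •
          (((0:ℝ), (1:ℝ)) - ((1:ℝ), (0:ℝ)) - ((0:ℝ), (1:ℝ))) = x := by
        ext <;> simp
      rw [e] at this
      exact ⟨h1, h3, by linarith [this.1], this.2⟩

/-- two of the three coordinate functionals are bounded by the norm, and the norm by the third -/
lemma hex_std {g : ℝ × ℝ → ℝ} (hg : PNorm g) (hI : Hex g (1, 0) (0, 1)) (x : ℝ × ℝ) :
    (g x ≤ |x.1 + x.2| ∧ |x.1| ≤ g x ∧ |x.2| ≤ g x) ∨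
    (g x ≤ |x.2| ∧ |x.1| ≤ g x ∧ |x.1 + x.2| ≤ g x) ∨
    (g x ≤ |x.1| ∧ |x.2| ≤ g x ∧ |x.1 + x.2| ≤ g x) := by
  rcases le_total 0 x.2 with h2 | h2
  · rcases hex_std_aux hg hI x h2 with ⟨a, b, c, d⟩ | ⟨a, b, c, d, e⟩ | ⟨a, b, c, d, e⟩
    · left
      rw [abs_of_nonneg a, abs_of_nonneg h2, abs_of_nonneg (add_nonneg a h2)]
      exact ⟨b, c, d⟩
    · right; left
      rw [abs_of_nonpos a, abs_of_nonneg h2, abs_of_nonneg b]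
      exact ⟨c, e, d⟩
    · right; right
      rw [abs_of_nonpos a, abs_of_nonneg h2, abs_of_nonpos b]
      exact ⟨c, d, e⟩
  · have := hex_std_aux hg hI (-x) (by simpa using h2)
    simp only [hg.neg, Prod.fst_neg, Prod.snd_neg] at this
    rcases this with ⟨a, b, c, d⟩ | ⟨a, b, c, d, e⟩ | ⟨a, b, c, d, e⟩
    · left
      rw [abs_of_nonpos (by linarith), abs_of_nonpos h2, abs_of_nonpos (by linarith)]
      exact ⟨by linarith, c, d⟩
    · right; left
      rw [abs_of_nonpos h2, abs_of_nonneg (by linarith : 0 ≤ x.1),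
        abs_of_nonpos (by linarith : x.1 + x.2 ≤ 0)]
      exact ⟨c, by linarith, by linarith⟩
    · right; right
      rw [abs_of_nonneg (by linarith), abs_of_nonpos h2, abs_of_nonneg (by linarith)]
      exact ⟨by linarith, d, by linarith⟩

/-- the integer lattice is admissible -/
lemma hex_int {g : ℝ × ℝ → ℝ} (hg : PNorm g) (hI : Hex g (1, 0) (0, 1)) (m n : ℤ)
    (h : ¬ (m = 0 ∧ n = 0)) : 1 ≤ g ((m : ℝ), (n : ℝ)) := by
  have key : ∀ k : ℤ, k ≠ 0 → |(k : ℝ)| ≤ g ((m : ℝ), (n : ℝ)) → 1 ≤ g ((m : ℝ), (n : ℝ)) := by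
    intro k hk h1
    have : (1 : ℤ) ≤ |k| := Int.one_le_abs hk
    have h2 : (1 : ℝ) ≤ |(k : ℝ)| := by exact_mod_cast this
    linarith
  rcases hex_std hg hI ((m : ℝ), (n : ℝ)) with ⟨-, a, b⟩ | ⟨-, a, b⟩ | ⟨-, a, b⟩ <;>
    simp only at a b
  · by_cases hm : m = 0
    · exact key n (by tauto) b
    · exact key m hm a
  · by_cases hm : m = 0
    · refine key (m + n) (by rw [hm, zero_add]; tauto) (by push_cast; exact b)
    · exact key m hm a
  · by_cases hm : n = 0
    · refine key (m + n) (by rw [hm, add_zero]; tauto) (by push_cast; exact b)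
    · exact key n hm a

/-- the affine-regular hexagon -/
def PP : Set (ℝ × ℝ) := {x | |x.1| ≤ 1 ∧ |x.2| ≤ 1 ∧ |x.1 + x.2| ≤ 1}

lemma PP_closed : IsClosed PP := by
  have h1 : IsClosed {x : ℝ × ℝ | |x.1| ≤ 1} := isClosed_le (by fun_prop) continuous_const
  have h2 : IsClosed {x : ℝ × ℝ | |x.2| ≤ 1} := isClosed_le (by fun_prop) continuous_const
  have h3 : IsClosed {x : ℝ × ℝ | |x.1 + x.2| ≤ 1} := isClosed_le (by fun_prop) continuous_const
  exact h1.inter (h2.inter h3)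

lemma PP_sub_body {g : ℝ × ℝ → ℝ} (hg : PNorm g) (hI : Hex g (1, 0) (0, 1)) : PP ⊆ body g := by
  rintro x ⟨h1, h2, h3⟩
  show g x ≤ 1
  rcases hex_std hg hI x with ⟨a, -, -⟩ | ⟨a, -, -⟩ | ⟨a, -, -⟩ <;> linarith

lemma PP_vol : volume PP ≤ 3 := by
  let R : Set (ℝ × ℝ) := regionBetween (fun _ => (0:ℝ)) (fun a => 1 - a) (Set.Ioo 0 1)
  have hR : volume R = ENNReal.ofReal (1 / 2) := vol_triangle
  have hRm : MeasurableSet R := by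
    have : Measurable (fun a : ℝ => 1 - a) := by fun_prop
    exact measurableSet_regionBetween measurable_const this measurableSet_Ioo
  let T1 : Set (ℝ × ℝ) := (fun x => ((1:ℝ), (1:ℝ)) - x) ⁻¹' R
  let T2 : Set (ℝ × ℝ) := (fun x => ((1:ℝ), (1:ℝ)) + x) ⁻¹' R
  have mp1 := Measure.measurePreserving_sub_left (volume : Measure (ℝ × ℝ)) ((1:ℝ), (1:ℝ))
  have mp2 := measurePreserving_add_left (volume : Measure (ℝ × ℝ)) ((1:ℝ), (1:ℝ))
  have v1 : volume T1 = ENNReal.ofReal (1 / 2) := by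
    rw [← hR]; exact mp1.measure_preimage hRm.nullMeasurableSet
  have v2 : volume T2 = ENNReal.ofReal (1 / 2) := by
    rw [← hR]; exact mp2.measure_preimage hRm.nullMeasurableSet
  have m1 : MeasurableSet T1 := mp1.measurable hRm
  have m2 : MeasurableSet T2 := mp2.measurable hRm
  have mem1 : ∀ x : ℝ × ℝ, x ∈ T1 → 0 < x.1 ∧ x.1 < 1 ∧ x.2 < 1 ∧ 1 < x.1 + x.2 := by
    rintro x ⟨⟨a, b⟩, c, d⟩
    simp only [Prod.fst_sub, Prod.snd_sub] at a b c d
    refine ⟨by linarith, by linarith, by linarith, by linarith⟩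
  have mem2 : ∀ x : ℝ × ℝ, x ∈ T2 → x.1 < 0 ∧ -1 < x.1 ∧ -1 < x.2 ∧ x.1 + x.2 < -1 := by
    rintro x ⟨⟨a, b⟩, c, d⟩
    simp only [Prod.fst_add, Prod.snd_add] at a b c d
    refine ⟨by linarith, by linarith, by linarith, by linarith⟩
  have hsub : PP ∪ T1 ∪ T2 ⊆ Set.Icc (-1:ℝ) 1 ×ˢ Set.Icc (-1:ℝ) 1 := by
    rintro x ((⟨h1, h2, h3⟩ | h) | h)
    · exact ⟨⟨(abs_le.1 h1).1, (abs_le.1 h1).2⟩, ⟨(abs_le.1 h2).1, (abs_le.1 h2).2⟩⟩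
    · obtain ⟨a, b, c, d⟩ := mem1 x h
      exact ⟨⟨by linarith, by linarith⟩, ⟨by linarith, by linarith⟩⟩
    · obtain ⟨a, b, c, d⟩ := mem2 x h
      exact ⟨⟨by linarith, by linarith⟩, ⟨by linarith, by linarith⟩⟩
  have hv := measure_mono (μ := volume) hsub
  rw [measure_union _ m2, measure_union _ m1, v1, v2, Measure.volume_eq_prod, Measure.prod_prod,
    Real.volume_Icc, add_assoc, ← ENNReal.ofReal_add (by norm_num) (by norm_num),
    ← ENNReal.ofReal_mul (by norm_num)] at hv
  · norm_num at hv
    have h4 : (4 : ENNReal) = 3 + 1 := by norm_num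
    rw [h4] at hv
    exact (ENNReal.add_le_add_iff_right ENNReal.one_ne_top).1 hv
  · rw [Set.disjoint_left]
    rintro x ⟨h1, h2, h3⟩ h
    have := mem1 x h
    linarith [(abs_le.1 h3).2]
  · rw [Set.disjoint_left]
    rintro x (⟨h1, h2, h3⟩ | h1) h
    · have := mem2 x h
      linarith [(abs_le.1 h3).1]
    · have := mem2 x h
      have := mem1 x h1
      linarith

/-- adding the caps -/
lemma caps_area {ι : Type} [Fintype ι] (φ : ι → (ℝ × ℝ →L[ℝ] ℝ)) {K0 L W S P : Set (ℝ × ℝ)}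
    (hK : MeasurableSet K0)
    (hex : ∀ x ∈ K0, ∀ i j, i ≠ j → 1 < φ i x → φ j x ≤ 1) {a c : ℝ} (ha : 0 < a) (hc : 0 ≤ c)
    (xs : ι → ℝ × ℝ) (hxs : ∀ i, xs i ∈ L) (hmax : ∀ i, ∀ x ∈ L, φ i x ≤ φ i (xs i))
    (hS : ∀ x ∈ K0, ∀ y ∈ L, a • x + c • y ∈ S)
    (hWS : W ⊆ S) (hWm : ∀ z ∈ W, ∀ i, φ i z ≤ a + c * φ i (xs i))
    (hP : ∀ x ∈ K0, (∀ i, φ i x ≤ 1) → x ∈ P) :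
    volume W + ENNReal.ofReal (a ^ 2) * (volume K0 - volume P) ≤ volume S := by
  let C : ι → Set (ℝ × ℝ) := fun i => {x | x ∈ K0 ∧ 1 < φ i x}
  have hCm : ∀ i, MeasurableSet (C i) := fun i =>
    hK.inter (isOpen_lt continuous_const (φ i).continuous).measurableSet
  let D : ι → Set (ℝ × ℝ) := fun i => (c • xs i) +ᵥ (a • C i)
  have hDm : ∀ i, MeasurableSet (D i) := fun i =>
    ((hCm i).const_smul_of_ne_zero ha.ne').const_vadd _
  have hDv : ∀ i, volume (D i) = ENNReal.ofReal (a ^ 2) * volume (C i) := by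
    intro i
    simp only [D]
    rw [measure_vadd, Measure.addHaar_smul, Module.finrank_prod, Module.finrank_self,
      abs_of_nonneg (by positivity)]
  have hDmem : ∀ i z, z ∈ D i → ∃ u ∈ C i, z = a • u + c • xs i := by
    rintro i z ⟨y, ⟨u, hu, rfl⟩, rfl⟩
    exact ⟨u, hu, by simp [add_comm]⟩
  have hdis : Pairwise (Function.onFun Disjoint D) := by
    intro i j hij
    rw [Function.onFun, Set.disjoint_left]
    intro z hz hz'
    obtain ⟨u, hu, rfl⟩ := hDmem i z hz
    obtain ⟨v, hv, e⟩ := hDmem j _ hz'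
    have h1 := hex u hu.1 i j hij hu.2
    have h2 := congrArg (φ j) e
    simp only [map_add, map_smul, smul_eq_mul] at h2
    have h3 := mul_le_mul_of_nonneg_left (hmax j _ (hxs i)) hc
    have h4 := mul_lt_mul_of_pos_left hv.2 ha
    have h5 := mul_le_mul_of_nonneg_left h1 ha.le
    linarith
  have hWd : Disjoint W (⋃ i, D i) := by
    rw [Set.disjoint_left]
    intro z hz hz'
    obtain ⟨i, hi⟩ := Set.mem_iUnion.1 hz'
    obtain ⟨v, hv, e⟩ := hDmem i _ hi
    have h2 := congrArg (φ i) e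
    simp only [map_add, map_smul, smul_eq_mul] at h2
    have h4 := mul_lt_mul_of_pos_left hv.2 ha
    have h5 := hWm z hz i
    linarith
  have hUS : W ∪ (⋃ i, D i) ⊆ S := by
    refine Set.union_subset hWS (Set.iUnion_subset fun i z hz => ?_)
    obtain ⟨u, hu, rfl⟩ := hDmem i z hz
    exact hS u hu.1 _ (hxs i)
  have hKP : volume K0 - volume P ≤ ∑' i, volume (C i) := by
    rw [tsub_le_iff_right]
    have : K0 ⊆ (⋃ i, C i) ∪ P := by
      intro x hx
      by_cases h : ∀ i, φ i x ≤ 1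
      · exact Or.inr (hP x hx h)
      · push Not at h
        obtain ⟨i, hi⟩ := h
        exact Or.inl (Set.mem_iUnion.2 ⟨i, hx, hi⟩)
    calc volume K0 ≤ volume ((⋃ i, C i) ∪ P) := measure_mono this
      _ ≤ volume (⋃ i, C i) + volume P := measure_union_le _ _
      _ ≤ _ := by gcongr; exact measure_iUnion_le _
  calc volume W + ENNReal.ofReal (a ^ 2) * (volume K0 - volume P)
      ≤ volume W + ENNReal.ofReal (a ^ 2) * ∑' i, volume (C i) := by gcongr
    _ = volume W + ∑' i, volume (D i) := by
      rw [← ENNReal.tsum_mul_left]; simp_rw [hDv]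
    _ = volume (W ∪ ⋃ i, D i) := by
      rw [measure_union hWd (MeasurableSet.iUnion hDm), measure_iUnion hdis hDm]
    _ ≤ volume S := measure_mono hUS

lemma seg_zero_mem {a : ℝ} (ha : 0 ≤ a) (d : ℝ × ℝ) : (0 : ℝ × ℝ) ∈ seg a d :=
  ⟨0, ⟨le_rfl, ha⟩, by simp⟩

lemma seg_end_mem {a : ℝ} (ha : 0 ≤ a) (d : ℝ × ℝ) : a • d ∈ seg a d :=
  ⟨a, ⟨ha, le_rfl⟩, rfl⟩

lemma zono_area {L : Set (ℝ × ℝ)} (hLc : IsCompact L) (hLconv : Convex ℝ L) (hL : 1 ≤ volume L)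
    {u1 v1 u2 v2 u3 v3 : ℝ × ℝ} (hu1 : u1 ∈ L) (hv1 : v1 ∈ L) (hu2 : u2 ∈ L) (hv2 : v2 ∈ L)
    (hu3 : u3 ∈ L) (hv3 : v3 ∈ L) (h1 : v1.1 ≤ u1.1) (h2 : v2.2 ≤ u2.2)
    (h3 : v3.1 + v3.2 ≤ u3.1 + u3.2)
    (hw : 4 ≤ (u1.1 - v1.1) + (u2.2 - v2.2) + ((u3.1 + u3.2) - (v3.1 + v3.2)))
    {a c : ℝ} (ha : 0 ≤ a) (hc : 0 ≤ c) :
    ENNReal.ofReal (c ^ 2 + 4 * a * c + 3 * a ^ 2) ≤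
      volume (c • L + seg a (1, 0) + seg a (0, 1) + seg a (-1, 1)) := by
  have k0 : IsCompact (c • L) := hLc.smul c
  have x0 : Convex ℝ (c • L) := hLconv.smul c
  have k1 := k0.add (seg_compact a (1, 0))
  have x1 := x0.add (seg_convex a (1, 0))
  have k2 := k1.add (seg_compact a (0, 1))
  have x2 := x1.add (seg_convex a (0, 1))
  have sm : ∀ {x}, x ∈ L → c • x ∈ c • L := fun hx => Set.smul_mem_smul_set hx
  have g0 : ENNReal.ofReal (c ^ 2) ≤ volume (c • L) := by
    rw [Measure.addHaar_smul, Module.finrank_prod, Module.finrank_self,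
      abs_of_nonneg (by positivity)]
    calc ENNReal.ofReal (c ^ 2) = ENNReal.ofReal (c ^ 2) * 1 := by rw [mul_one]
      _ ≤ _ := by gcongr
  have g1 := seg_area k0 x0 (sm hv2) (sm hu2) ha (1, 0) (0, 1) (by simp [cr])
  have g2 := seg_area k1 x1 (Set.add_mem_add (sm hu1) (seg_end_mem ha (1, 0)))
    (Set.add_mem_add (sm hv1) (seg_zero_mem ha (1, 0))) ha (0, 1) (-1, 0) (by simp [cr])
  have g3 := seg_area k2 x2
    (Set.add_mem_add (Set.add_mem_add (sm hu3) (seg_end_mem ha (1, 0))) (seg_end_mem ha (0, 1)))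
    (Set.add_mem_add (Set.add_mem_add (sm hv3) (seg_zero_mem ha (1, 0))) (seg_zero_mem ha (0, 1)))
    ha (-1, 1) (-1, 0) (by simp [cr])
  have e1 : cr (1, 0) (c • u2) - cr (1, 0) (c • v2) = c * (u2.2 - v2.2) := by
    simp [cr]; ring
  have e2 : cr (0, 1) (c • v1 + 0) - cr (0, 1) (c • u1 + a • (1, 0)) = c * (u1.1 - v1.1) + a := by
    simp [cr]; ring
  have e3 : cr (-1, 1) (c • v3 + 0 + 0) - cr (-1, 1) (c • u3 + a • (1, 0) + a • (0, 1))
      = c * ((u3.1 + u3.2) - (v3.1 + v3.2)) + 2 * a := by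
    simp [cr]; ring
  rw [e1] at g1
  rw [e2] at g2
  rw [e3] at g3
  have p1 : 0 ≤ c * (u2.2 - v2.2) := mul_nonneg hc (by linarith)
  have p2 : 0 ≤ c * (u1.1 - v1.1) := mul_nonneg hc (by linarith)
  have p3 : 0 ≤ c * ((u3.1 + u3.2) - (v3.1 + v3.2)) := mul_nonneg hc (by linarith)
  refine le_trans ?_ g3
  refine le_trans ?_ (add_le_add_left g2 _)
  refine le_trans ?_ (add_le_add_left (add_le_add_left g1 _) _)
  refine le_trans ?_ (add_le_add_left (add_le_add_left (add_le_add_left g0 _) _) _)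
  rw [← ENNReal.ofReal_add (by positivity) (by positivity),
    ← ENNReal.ofReal_add (by positivity) (by positivity),
    ← ENNReal.ofReal_add (by positivity) (by positivity)]
  apply ENNReal.ofReal_le_ofReal
  have := mul_le_mul_of_nonneg_left hw (mul_nonneg ha hc)
  nlinarith

/-- the area of `a K₀ + c L` for a covering `L` -/
lemma section_area {g : ℝ × ℝ → ℝ} (hg : PNorm g) (hI : Hex g (1, 0) (0, 1)) {L : Set (ℝ × ℝ)}
    (hLc : IsCompact L) (hLconv : Convex ℝ L) (hcov : ∀ x, ∃ m n : ℤ, zt x m n ∈ L) {a c : ℝ}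
    (ha : 0 < a) (hc : 0 ≤ c) {S : Set (ℝ × ℝ)}
    (hS : ∀ x ∈ body g, ∀ y ∈ L, a • x + c • y ∈ S) :
    ENNReal.ofReal (a ^ 2 * volume.real (body g) + 4 * a * c + c ^ 2) ≤ volume S := by
  have hne : L.Nonempty := by
    obtain ⟨m, n, h⟩ := hcov 0
    exact ⟨_, h⟩
  let f1 : ℝ × ℝ →L[ℝ] ℝ := ContinuousLinearMap.fst ℝ ℝ ℝ
  let f2 : ℝ × ℝ →L[ℝ] ℝ := ContinuousLinearMap.snd ℝ ℝ ℝ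
  let φ : Fin 6 → (ℝ × ℝ →L[ℝ] ℝ) := ![f1, -f1, f2, -f2, f1 + f2, -(f1 + f2)]
  have φ0 : ∀ x, φ 0 x = x.1 := fun x => rfl
  have φ1 : ∀ x, φ 1 x = -x.1 := fun x => rfl
  have φ2 : ∀ x, φ 2 x = x.2 := fun x => rfl
  have φ3 : ∀ x, φ 3 x = -x.2 := fun x => rfl
  have φ4 : ∀ x, φ 4 x = x.1 + x.2 := fun x => rfl
  have φ5 : ∀ x, φ 5 x = -(x.1 + x.2) := fun x => rfl
  have hex0 : ∀ i, ∃ x ∈ L, ∀ y ∈ L, φ i y ≤ φ i x := by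
    intro i
    obtain ⟨x, hx, hm⟩ := hLc.exists_isMaxOn hne (φ i).continuous.continuousOn
    exact ⟨x, hx, fun y hy => hm hy⟩
  choose xs hxs hmax using hex0
  have q0 := fun y hy => hmax 0 y hy
  have q1 := fun y hy => hmax 1 y hy
  have q2 := fun y hy => hmax 2 y hy
  have q3 := fun y hy => hmax 3 y hy
  have q4 := fun y hy => hmax 4 y hy
  have q5 := fun y hy => hmax 5 y hy
  simp only [φ0, φ1, φ2, φ3, φ4, φ5] at q0 q1 q2 q3 q4 q5
  have hw := cover_width hcov (x0 := (xs 1).1) (X := (xs 0).1 - (xs 1).1) (y0 := (xs 3).2)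
    (Y := (xs 2).2 - (xs 3).2) (s0 := (xs 5).1 + (xs 5).2)
    (S := ((xs 4).1 + (xs 4).2) - ((xs 5).1 + (xs 5).2))
    (fun z hz => ⟨by linarith [q1 z hz], by linarith [q0 z hz]⟩)
    (fun z hz => ⟨by linarith [q3 z hz], by linarith [q2 z hz]⟩)
    (fun z hz => ⟨by linarith [q5 z hz], by linarith [q4 z hz]⟩)
  have hz := zono_area hLc hLconv (cover_area hLc.isClosed.measurableSet hcov) (hxs 0) (hxs 1)
    (hxs 2) (hxs 3) (hxs 4) (hxs 5) (q0 _ (hxs 1)) (q2 _ (hxs 3)) (q4 _ (hxs 5)) hw ha.le hc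
  let Z := c • L + seg a (1, 0) + seg a (0, 1) + seg a (-1, 1)
  let W : Set (ℝ × ℝ) := ((0 : ℝ), -a) +ᵥ Z
  have hWmem : ∀ z ∈ W, ∃ p ∈ PP, ∃ y ∈ L, z = a • p + c • y := by
    rintro z ⟨w, ⟨w1, ⟨w2, ⟨w3, ⟨y, hy, rfl⟩, w4, ⟨α, ⟨hα0, hα1⟩, rfl⟩, rfl⟩, w5,
      ⟨β, ⟨hβ0, hβ1⟩, rfl⟩, rfl⟩, w6, ⟨γ, ⟨hγ0, hγ1⟩, rfl⟩, rfl⟩, rfl⟩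
    refine ⟨((α - γ) / a, (β + γ - a) / a), ⟨?_, ?_, ?_⟩, y, hy, ?_⟩
    · simp only
      rw [abs_div, abs_of_pos ha, div_le_one ha, abs_le]; constructor <;> linarith
    · simp only
      rw [abs_div, abs_of_pos ha, div_le_one ha, abs_le]; constructor <;> linarith
    · simp only
      rw [← add_div, abs_div, abs_of_pos ha, div_le_one ha, abs_le]; constructor <;> linarith
    · ext
      · simp; field_simp; ring
      · simp; field_simp; ring
  have hWv : volume W = volume Z := measure_vadd _ _ _
  have hWS : W ⊆ S := by
    intro z hz'
    obtain ⟨p, hp, y, hy, rfl⟩ := hWmem z hz'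
    exact hS p (PP_sub_body hg hI hp) y hy
  have hPφ : ∀ p ∈ PP, ∀ i, φ i p ≤ 1 := by
    rintro p ⟨a1, a2, a3⟩ i
    rw [abs_le] at a1 a2 a3
    fin_cases i
    · show p.1 ≤ 1
      linarith
    · show -p.1 ≤ 1
      linarith
    · show p.2 ≤ 1
      linarith
    · show -p.2 ≤ 1
      linarith
    · show p.1 + p.2 ≤ 1
      linarith
    · show -(p.1 + p.2) ≤ 1
      linarith
  have hexcl : ∀ x ∈ body g, ∀ i j, i ≠ j → 1 < φ i x → φ j x ≤ 1 := by
    intro x hx i j hij h1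
    have hx : g x ≤ 1 := hx
    by_contra h2
    push Not at h2
    have key : (|x.1| ≤ 1 ∧ |x.2| ≤ 1) ∨ (|x.1| ≤ 1 ∧ |x.1 + x.2| ≤ 1) ∨
        (|x.2| ≤ 1 ∧ |x.1 + x.2| ≤ 1) := by
      rcases hex_std hg hI x with ⟨-, a, b⟩ | ⟨-, a, b⟩ | ⟨-, a, b⟩
      · exact Or.inl ⟨a.trans hx, b.trans hx⟩
      · exact Or.inr (Or.inl ⟨a.trans hx, b.trans hx⟩)
      · exact Or.inr (Or.inr ⟨a.trans hx, b.trans hx⟩)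
    simp only [abs_le] at key
    have d0 := φ0 x
    have d1 := φ1 x
    have d2 := φ2 x
    have d3 := φ3 x
    have d4 := φ4 x
    have d5 := φ5 x
    have cases6 : ∀ k : Fin 6, k = 0 ∨ k = 1 ∨ k = 2 ∨ k = 3 ∨ k = 4 ∨ k = 5 := by decide
    rcases key with ⟨⟨a1, a2⟩, b1, b2⟩ | ⟨⟨a1, a2⟩, b1, b2⟩ | ⟨⟨a1, a2⟩, b1, b2⟩ <;>
    rcases cases6 i with rfl | rfl | rfl | rfl | rfl | rfl <;>
    rcases cases6 j with rfl | rfl | rfl | rfl | rfl | rfl <;>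
    first
    | exact absurd rfl hij
    | linarith
  have hmain := caps_area φ (K0 := body g) (L := L) (W := W) (S := S) (P := PP) (body_meas hg)
    hexcl ha hc xs hxs (fun i x hx => hmax i x hx) hS hWS (by
      intro z hz' i
      obtain ⟨p, hp, y, hy, rfl⟩ := hWmem z hz'
      rw [map_add, map_smul, map_smul, smul_eq_mul, smul_eq_mul]
      have t1 := mul_le_mul_of_nonneg_left (hPφ p hp i) ha.le
      have t2 := mul_le_mul_of_nonneg_left (hmax i y hy) hc
      linarith) (by
      intro x hx h
      have h0 := h 0
      have h1 := h 1
      have h2 := h 2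
      have h3 := h 3
      have h4 := h 4
      have h5 := h 5
      rw [φ0] at h0
      rw [φ1] at h1
      rw [φ2] at h2
      rw [φ3] at h3
      rw [φ4] at h4
      rw [φ5] at h5
      exact ⟨abs_le.2 ⟨by linarith, h0⟩, abs_le.2 ⟨by linarith, h2⟩, abs_le.2 ⟨by linarith, h4⟩⟩)
  refine le_trans ?_ hmain
  rw [hWv]
  have hA : volume (body g) = ENNReal.ofReal (volume.real (body g)) := by
    rw [measureReal_def, ENNReal.ofReal_toReal (body_compact hg).measure_lt_top.ne]
  have h3 : (3 : ENNReal) = ENNReal.ofReal 3 := by norm_num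
  have hsub : ENNReal.ofReal (volume.real (body g) - 3) ≤ volume (body g) - volume PP := by
    rw [ENNReal.ofReal_sub _ (by norm_num), ← hA, ← h3]
    exact tsub_le_tsub_left PP_vol _
  calc ENNReal.ofReal (a ^ 2 * volume.real (body g) + 4 * a * c + c ^ 2)
      = ENNReal.ofReal ((c ^ 2 + 4 * a * c + 3 * a ^ 2) + a ^ 2 * (volume.real (body g) - 3)) := by
        congr 1; ring
    _ ≤ ENNReal.ofReal (c ^ 2 + 4 * a * c + 3 * a ^ 2)
        + ENNReal.ofReal (a ^ 2 * (volume.real (body g) - 3)) := ENNReal.ofReal_add_le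
    _ ≤ _ := by
      rw [ENNReal.ofReal_mul (by positivity)]
      gcongr

lemma haar3 : (volume : Measure (ℝ × ℝ × ℝ)).IsAddHaarMeasure := by
  rw [Measure.volume_eq_prod]; infer_instance

lemma poly_int (A B C : ℝ) : ∫ x in (0:ℝ)..1, ((1 - x) ^ 2 * A + 4 * (1 - x) * x * B + x ^ 2 * C)
    = (A + 2 * B + C) / 3 := by
  have e : ∀ x : ℝ, (1 - x) ^ 2 * A + 4 * (1 - x) * x * B + x ^ 2 * C
      = A + (4 * B - 2 * A) * x + (A - 4 * B + C) * x ^ 2 := by intro x; ring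
  simp_rw [e]
  rw [intervalIntegral.integral_add, intervalIntegral.integral_add,
    intervalIntegral.integral_const_mul, intervalIntegral.integral_const_mul, integral_id,
    integral_pow, intervalIntegral.integral_const]
  · norm_num; ring
  · exact Continuous.intervalIntegrable (by fun_prop) _ _
  · exact Continuous.intervalIntegrable (by fun_prop) _ _
  · exact Continuous.intervalIntegrable (by fun_prop) _ _
  · exact Continuous.intervalIntegrable (by fun_prop) _ _

lemma vol_int {K : Set (ℝ × ℝ × ℝ)} (hK : MeasurableSet K) (hs : ∀ x ∈ K, -x ∈ K) {s A B C : ℝ}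
    (h0 : 0 < s) (hA : 0 ≤ A) (hB : 0 ≤ B) (hC : 0 ≤ C)
    (h : ∀ l : ℝ, 0 < l → l < 1 →
      ENNReal.ofReal ((1 - l) ^ 2 * A + 4 * (1 - l) * l * B + l ^ 2 * C)
        ≤ volume {x : ℝ × ℝ | (l * s, x) ∈ K}) :
    ENNReal.ofReal (2 * s * (A + 2 * B + C) / 3) ≤ volume K := by
  let H1 : Set (ℝ × ℝ × ℝ) := {x | 0 < x.1}
  have hH1 : MeasurableSet H1 := (isOpen_lt continuous_const continuous_fst).measurableSet
  have hneg : volume (-(K ∩ H1)) = volume (K ∩ H1) := by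
    have e : -(K ∩ H1) = (-1 : ℝ) • (K ∩ H1) := by
      rw [Set.neg_smul_set, one_smul]
    have := haar3
    rw [e, Measure.addHaar_smul, abs_pow, abs_neg, abs_one, one_pow, ENNReal.ofReal_one, one_mul]
  have hdisj : Disjoint (K ∩ H1) (-(K ∩ H1)) := by
    rw [Set.disjoint_left]
    rintro x ⟨-, h1⟩ ⟨-, h2⟩
    have h1 : 0 < x.1 := h1
    have h2 : 0 < (-x).1 := h2
    simp only [Prod.fst_neg] at h2
    linarith
  have h2 : volume (K ∩ H1) + volume (K ∩ H1) ≤ volume K := by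
    have := measure_union (μ := volume) hdisj (hK.inter hH1).neg
    rw [hneg] at this
    rw [← this]
    refine measure_mono (Set.union_subset Set.inter_subset_left ?_)
    rintro x ⟨hx, -⟩
    simpa using hs _ hx
  have hintg : ∫ t in Set.Ioc 0 s, ((1 - t / s) ^ 2 * A + 4 * (1 - t / s) * (t / s) * B
      + (t / s) ^ 2 * C) = s * ((A + 2 * B + C) / 3) := by
    rw [← intervalIntegral.integral_of_le h0.le]
    have := intervalIntegral.integral_comp_div (a := 0) (b := s) (c := s)
      (fun x : ℝ => (1 - x) ^ 2 * A + 4 * (1 - x) * x * B + x ^ 2 * C) h0.ne'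
    rw [this, zero_div, div_self h0.ne', poly_int, smul_eq_mul]
  have h3 : ENNReal.ofReal (s * ((A + 2 * B + C) / 3)) ≤ volume (K ∩ H1) := by
    rw [← hintg, ofReal_integral_eq_lintegral_ofReal]
    · rw [Measure.volume_eq_prod, Measure.prod_apply (hK.inter hH1),
        ← lintegral_indicator measurableSet_Ioc]
      have hne : ∀ᵐ t : ℝ, t ≠ s := by
        simp [ae_iff]
      refine lintegral_mono_ae ?_
      filter_upwards [hne] with t ht
      by_cases hts : t ∈ Set.Ioc 0 s
      · rw [Set.indicator_of_mem hts]
        have hlt : t < s := lt_of_le_of_ne hts.2 ht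
        refine (h (t / s) (div_pos hts.1 h0) ((div_lt_one h0).2 hlt)).trans (measure_mono ?_)
        intro x hx
        have hx : (t / s * s, x) ∈ K := hx
        rw [div_mul_cancel₀ _ h0.ne'] at hx
        exact ⟨hx, hts.1⟩
      · rw [Set.indicator_of_notMem hts]
        exact zero_le
    · have : Continuous fun t : ℝ => (1 - t / s) ^ 2 * A + 4 * (1 - t / s) * (t / s) * B
          + (t / s) ^ 2 * C := by fun_prop
      exact (this.integrableOn_Icc (a := 0) (b := s)).mono_set Set.Ioc_subset_Icc_self
    · filter_upwards [ae_restrict_mem measurableSet_Ioc] with t ht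
      have h1 : 0 ≤ t / s := div_nonneg ht.1.le h0.le
      have h2 : 0 ≤ 1 - t / s := by rw [sub_nonneg, div_le_one h0]; exact ht.2
      simp only [Pi.zero_apply]
      positivity
  calc ENNReal.ofReal (2 * s * (A + 2 * B + C) / 3)
      = ENNReal.ofReal (s * ((A + 2 * B + C) / 3)) + ENNReal.ofReal (s * ((A + 2 * B + C) / 3)) := by
        rw [← ENNReal.ofReal_add (by positivity) (by positivity)]; congr 1; ring
    _ ≤ _ := (add_le_add h3 h3).trans h2

/-- a norm on three-space -/
structure SNorm (N : ℝ × ℝ × ℝ → ℝ) : Prop where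
  add : ∀ x y, N (x + y) ≤ N x + N y
  smul : ∀ (a : ℝ) x, N (a • x) = |a| * N x
  cont : Continuous N
  bdd : ∃ c > 0, ∀ x, c * ‖x‖ ≤ N x

namespace SNorm
variable {N : ℝ × ℝ × ℝ → ℝ}

lemma neg (hN : SNorm N) (x : ℝ × ℝ × ℝ) : N (-x) = N x := by
  have := hN.smul (-1) x
  simpa using this

lemma pos (hN : SNorm N) {x : ℝ × ℝ × ℝ} (hx : x ≠ 0) : 0 < N x := by
  obtain ⟨c, hc, h⟩ := hN.bdd
  exact lt_of_lt_of_le (mul_pos hc (norm_pos_iff.2 hx)) (h x)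

lemma ball_compact (hN : SNorm N) : IsCompact {x | N x ≤ 1} := by
  obtain ⟨c, hc0, hcb⟩ := hN.bdd
  refine (isCompact_closedBall (0 : ℝ × ℝ × ℝ) (1 / c)).of_isClosed_subset
    (isClosed_le hN.cont continuous_const) ?_
  intro x hx
  simp only [Metric.mem_closedBall, dist_zero_right]
  rw [le_div_iff₀ hc0]
  have := hcb x
  have : N x ≤ 1 := hx
  linarith

lemma comb (hN : SNorm N) {a b : ℝ} (ha : 0 ≤ a) (hb : 0 ≤ b) (x y : ℝ × ℝ × ℝ) :
    N (a • x + b • y) ≤ a * N x + b * N y := by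
  have := hN.add (a • x) (b • y)
  rwa [hN.smul, hN.smul, abs_of_nonneg ha, abs_of_nonneg hb] at this

lemma height (hN : SNorm N) : ∃ H > 0, (∃ x, N (H, x) ≤ 1) ∧ ∀ s x, |s| ≤ H * N (s, x) := by
  have hne : {x | N x ≤ 1}.Nonempty := ⟨0, by
    have := hN.smul 0 0
    simp at this
    simp [this]⟩
  obtain ⟨⟨H, x0⟩, hx0, hmax⟩ := hN.ball_compact.exists_isMaxOn hne continuous_fst.continuousOn
  have hmax' : ∀ s x, N (s, x) ≤ 1 → s ≤ H := fun s x h => hmax (a := (s, x)) h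
  have key : ∀ s x, |s| ≤ H * N (s, x) := by
    intro s x
    by_cases h0 : (s, x) = (0 : ℝ × ℝ × ℝ)
    · have h1 : s = 0 := congrArg Prod.fst h0
      rw [h0]
      have := hN.smul 0 0
      simp at this
      rw [this, h1]; simp
    · have hp := hN.pos h0
      have hs : ∀ σ : ℝ, |σ| = 1 → σ * s ≤ H * N (s, x) := by
        intro σ hσ
        have : N ((σ / N (s, x)) • (s, x)) ≤ 1 := by
          rw [hN.smul, abs_div, hσ, abs_of_pos hp, one_div, inv_mul_cancel₀ hp.ne']
        have := hmax' _ _ this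
        rw [smul_eq_mul, div_mul_eq_mul_div, div_le_iff₀ hp] at this
        exact this
      rw [abs_le]
      constructor
      · have := hs (-1) (by simp)
        linarith
      · have := hs 1 (by simp)
        linarith
  refine ⟨H, ?_, ⟨x0, hx0⟩, key⟩
  have h1 := key 1 0
  rw [abs_one] at h1
  have h2 : 0 < N (1, 0) := hN.pos (by simp)
  by_contra hH
  push Not at hH
  nlinarith

end SNorm

theorem spatial {N : ℝ × ℝ × ℝ → ℝ} (hN : SNorm N) {g : ℝ × ℝ → ℝ} (hgN : ∀ x, N (0, x) = g x)
    (hg : PNorm g)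
    (hI : Hex g (1, 0) (0, 1)) (hA : 3.571 ≤ volume.real (body g)) :
    ∃ (t : ℝ) (v : ℝ × ℝ), 0 < t ∧
      (∀ m n k : ℤ, ¬ (m = 0 ∧ n = 0 ∧ k = 0) → 1 ≤ N (k * t, m + k * v.1, n + k * v.2)) ∧
      8 * t * 0.54757 ≤ volume.real {x | N x ≤ 1} := by
  obtain ⟨H, hH, ⟨x0, hx0⟩, hht⟩ := hN.height
  have hmeas : MeasurableSet {x | N x ≤ 1} := hN.ball_compact.isClosed.measurableSet
  have hsym : ∀ x ∈ {x | N x ≤ 1}, -x ∈ {x | N x ≤ 1} := by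
    intro x hx
    show N (-x) ≤ 1
    rw [hN.neg]; exact hx
  have toReal : ∀ r : ℝ, ENNReal.ofReal r ≤ volume {x | N x ≤ 1} →
      r ≤ volume.real {x | N x ≤ 1} := by
    intro r hr
    exact (ENNReal.ofReal_le_iff_le_toReal hN.ball_compact.measure_lt_top.ne).1 hr
  let S : Set ℝ := {t | H / 2 ≤ t ∧ t ≤ H ∧ ∃ x, ∀ m n : ℤ, 1 ≤ N (t, zt x m n)}
  have hHS : H ∈ S := by
    refine ⟨by linarith, le_rfl, 0, fun m n => ?_⟩
    have := hht H (zt 0 m n)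
    rw [abs_of_pos hH] at this
    by_contra hlt
    push Not at hlt
    nlinarith
  have hbb : BddBelow S := ⟨H / 2, fun t ht => ht.1⟩
  obtain ⟨τ, hτ⟩ : ∃ τ, τ = sInf S := ⟨_, rfl⟩
  have hτ2 : H / 2 ≤ τ := hτ ▸ le_csInf ⟨H, hHS⟩ (fun t ht => ht.1)
  have hτH : τ ≤ H := hτ ▸ csInf_le hbb hHS
  have hτ0 : 0 < τ := by linarith
  obtain ⟨t, ⟨ht1, ht2, v, hv⟩, htlt⟩ : ∃ t ∈ S, t < τ * (1 + 0.000001) :=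
    exists_lt_of_csInf_lt ⟨H, hHS⟩ (by rw [← hτ]; nlinarith)
  obtain ⟨s, hs⟩ : ∃ s, s = τ * (1 - 0.000001) := ⟨_, rfl⟩
  have hs0 : 0 < s := by rw [hs]; exact mul_pos hτ0 (by norm_num)
  have hsS : s ∉ S := by
    intro h
    have := csInf_le hbb h
    rw [← hτ, hs] at this
    nlinarith
  refine ⟨t, v, by linarith, ?_, ?_⟩
  · intro m n k h
    have one : ∀ m n : ℤ, 1 ≤ N (t, m + v.1, n + v.2) := by
      intro m n
      have := hv m n
      unfold zt at this
      rw [add_comm (m : ℝ), add_comm (n : ℝ)]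
      exact this
    rcases lt_trichotomy k 0 with hk | hk | hk
    · rcases (by omega : k = -1 ∨ k ≤ -2) with rfl | hk2
      · have := one (-m) (-n)
        rw [← hN.neg] at this
        convert this using 2
        ext <;> simp [add_comm]
      · have h1 := hht (k * t) (m + k * v.1, n + k * v.2)
        have hkr : (k : ℝ) ≤ -2 := by exact_mod_cast hk2
        rw [abs_of_neg (by nlinarith)] at h1
        by_contra hlt
        push Not at hlt
        nlinarith
    · subst hk
      have := hex_int hg hI m n (by tauto)
      simp only [Int.cast_zero, zero_mul, add_zero]
      rw [hgN]; exact this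
    · rcases (by omega : k = 1 ∨ 2 ≤ k) with rfl | hk2
      · have := one m n
        simpa using this
      · have h1 := hht (k * t) (m + k * v.1, n + k * v.2)
        have hkr : (2 : ℝ) ≤ k := by exact_mod_cast hk2
        rw [abs_of_pos (by nlinarith)] at h1
        by_contra hlt
        push Not at hlt
        nlinarith
  · by_cases hsH : H / 2 ≤ s
    · have hsle : s ≤ H := by rw [hs]; nlinarith
      have hcov : ∀ x, ∃ m n : ℤ, zt x m n ∈ {x | N (s, x) ≤ 1} := by
        intro x
        by_contra hcon
        push Not at hcon
        apply hsS
        refine ⟨hsH, hsle, x, fun m n => ?_⟩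
        have := hcon m n
        have : ¬ N (s, zt x m n) ≤ 1 := this
        linarith
      have hLc : IsCompact {x | N (s, x) ≤ 1} := by
        have hcl : IsClosed {x | N (s, x) ≤ 1} :=
          isClosed_le (hN.cont.comp (by fun_prop)) continuous_const
        refine (hN.ball_compact.image continuous_snd).of_isClosed_subset hcl ?_
        intro x hx
        exact ⟨(s, x), hx, rfl⟩
      have hLconv : Convex ℝ {x | N (s, x) ≤ 1} := by
        intro x hx y hy a b ha hb hab
        have hx : N (s, x) ≤ 1 := hx
        have hy : N (s, y) ≤ 1 := hy
        have e : (s, a • x + b • y) = a • (s, x) + b • (s, y) := by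
          ext <;> simp
          rw [← add_mul, hab, one_mul]
        show N (s, a • x + b • y) ≤ 1
        rw [e]
        have := hN.comb ha hb (s, x) (s, y)
        nlinarith
      have := toReal _ (vol_int hmeas hsym hs0 (A := volume.real (body g)) (B := 1) (C := 1)
        (by linarith) zero_le_one zero_le_one (by
          intro l hl0 hl1
          rw [mul_one, mul_one, mul_comm ((1 - l) ^ 2)]
          have := section_area hg hI hLc hLconv hcov (a := 1 - l) (c := l)
            (S := {x | (l * s, x) ∈ {x | N x ≤ 1}}) (by linarith) hl0.le (by
              intro x hx y hy
              have hx : g x ≤ 1 := hx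
              have hy : N (s, y) ≤ 1 := hy
              show N (l * s, (1 - l) • x + l • y) ≤ 1
              have e : (l * s, (1 - l) • x + l • y) = (1 - l) • (0, x) + l • (s, y) := by
                ext <;> simp
              rw [e]
              have := hN.comb (sub_nonneg.2 hl1.le) hl0.le (0, x) (s, y)
              rw [hgN] at this
              nlinarith)
          rw [mul_comm (volume.real (body g))]
          exact this))
      nlinarith
    · push Not at hsH
      have := toReal _ (vol_int hmeas hsym hH (A := volume.real (body g)) (B := 0) (C := 0)
        (by linarith) le_rfl le_rfl (by
          intro l hl0 hl1
          have hl : 0 < 1 - l := by linarith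
          rw [mul_zero, mul_zero, add_zero, add_zero]
          have hsub : (l • x0) +ᵥ ((1 - l) • body g) ⊆ {x | (l * H, x) ∈ {x | N x ≤ 1}} := by
            rintro z ⟨y, ⟨x, hx, rfl⟩, rfl⟩
            have hx : g x ≤ 1 := hx
            show N (l * H, l • x0 + (1 - l) • x) ≤ 1
            have e : (l * H, l • x0 + (1 - l) • x) = (1 - l) • (0, x) + l • (H, x0) := by
              ext <;> simp <;> ring
            rw [e]
            have := hN.comb hl.le hl0.le (0, x) (H, x0)
            rw [hgN] at this
            nlinarith
          refine le_trans (le_of_eq ?_) (measure_mono hsub)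
          rw [measure_vadd, Measure.addHaar_smul, Module.finrank_prod, Module.finrank_self,
            abs_of_nonneg (by positivity), ENNReal.ofReal_mul (by positivity), measureReal_def,
            ENNReal.ofReal_toReal (body_compact hg).measure_lt_top.ne]))
      nlinarith

lemma min_hex {g : ℝ × ℝ → ℝ} (hg : PNorm g) :
    ∃ p q, Hex g p q ∧ ∀ p' q', Hex g p' q' → cr p q ≤ cr p' q' := by
  let T : Set ((ℝ × ℝ) × (ℝ × ℝ)) :=
    {z | g z.1 = 1 ∧ g z.2 = 1 ∧ g (z.2 - z.1) = 1 ∧ 0 ≤ cr z.1 z.2}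
  have hgc := hg.cont
  have hcc : Continuous fun z : (ℝ × ℝ) × (ℝ × ℝ) => cr z.1 z.2 := by
    unfold cr; fun_prop
  have hTc : IsClosed T := by
    refine IsClosed.inter (isClosed_eq (by fun_prop) continuous_const) (IsClosed.inter
      (isClosed_eq (by fun_prop) continuous_const) (IsClosed.inter
      (isClosed_eq (by fun_prop) continuous_const) (isClosed_le continuous_const hcc)))
  have hT : IsCompact T := by
    refine ((body_compact hg).prod (body_compact hg)).of_isClosed_subset hTc ?_
    rintro z ⟨h1, h2, -⟩
    exact ⟨h1.le, h2.le⟩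
  have hne : T.Nonempty := by
    have h10 : ((1:ℝ), (0:ℝ)) ≠ 0 := by simp
    obtain ⟨q, h1, h2, h3⟩ := exists_hexS hg h10
    have := Hex.of_scaled hg (hg.pos _ h10) h1 h2 h3
    exact ⟨(_, _), this.hp, this.hq, this.hr, this.hD.le⟩
  obtain ⟨⟨p, q⟩, ⟨h1, h2, h3, h4⟩, hmin⟩ := hT.exists_isMinOn hne hcc.continuousOn
  simp only at h1 h2 h3 h4
  have hp : p ≠ 0 := by
    rintro rfl
    rw [hg.zero] at h1
    norm_num at h1
  have h5 := not_parallel hg hp (h2.trans h1.symm) (h3.trans h1.symm)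
  refine ⟨p, q, ⟨h1, h2, h3, lt_of_le_of_ne h4 h5.symm⟩, ?_⟩
  intro p' q' h'
  exact hmin (a := (p', q')) ⟨h'.hp, h'.hq, h'.hr, h'.hD.le⟩

lemma cr_colMap (p q x y : ℝ × ℝ) : cr (colMap p q x) (colMap p q y) = cr x y * cr p q := by
  rw [colMap_apply, colMap_apply]
  simp [cr]; ring

lemma colMap_inj {p q : ℝ × ℝ} (h : 0 < cr p q) {x : ℝ × ℝ} (hx : colMap p q x = 0) : x = 0 := by
  have h1 := cr_colMap p q x (-x.2, x.1)
  rw [hx] at h1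
  have h2 : cr x (-x.2, x.1) = x.1 ^ 2 + x.2 ^ 2 := by simp [cr]; ring
  rw [h2] at h1
  have h3 : x.1 ^ 2 + x.2 ^ 2 = 0 := by
    have : cr (0 : ℝ × ℝ) (colMap p q (-x.2, x.1)) = 0 := by simp [cr]
    rw [this] at h1
    rcases mul_eq_zero.1 h1.symm with h | h
    · exact h
    · linarith
  ext
  · show x.1 = 0
    nlinarith [sq_nonneg x.1, sq_nonneg x.2]
  · show x.2 = 0
    nlinarith [sq_nonneg x.1, sq_nonneg x.2]

lemma colMap_bdd {p q : ℝ × ℝ} (h : 0 < cr p q) : ∃ c > 0, ∀ x, c * ‖x‖ ≤ ‖colMap p q x‖ := by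
  obtain ⟨K, hK, hanti⟩ := LinearMap.exists_antilipschitzWith (colMap p q)
    (LinearMap.ker_eq_bot'.2 fun x hx => colMap_inj h hx)
  have hK' : (0:ℝ) < K := hK
  refine ⟨(K:ℝ)⁻¹, inv_pos.2 hK', fun x => ?_⟩
  rw [inv_mul_le_iff₀ hK']
  exact hanti.le_mul_norm (map_zero _) x

theorem spatial2 {N : ℝ × ℝ × ℝ → ℝ} (hN : SNorm N) (hg : PNorm fun x => N (0, x)) :
    ∃ (t : ℝ) (p q w : ℝ × ℝ), 0 < t ∧ 0 < cr p q ∧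
      (∀ m n k : ℤ, ¬ (m = 0 ∧ n = 0 ∧ k = 0) →
        1 ≤ N (k * t, (m : ℝ) • p + (n : ℝ) • q + (k : ℝ) • w)) ∧
      8 * t * cr p q * 0.54757 ≤ volume.real {x | N x ≤ 1} := by
  obtain ⟨g, hgdef⟩ : ∃ g : ℝ × ℝ → ℝ, g = fun x => N (0, x) := ⟨_, rfl⟩
  rw [← hgdef] at hg
  obtain ⟨p, q, hpq, hmin⟩ := min_hex hg
  have hD := hpq.hD
  have hcm : Continuous (colMap p q) := (colMap p q).continuous_of_finiteDimensional
  obtain ⟨c1, hc1, hb1⟩ := colMap_bdd hD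
  obtain ⟨c2, hc2, hb2⟩ := hg.bdd
  obtain ⟨c3, hc3, hb3⟩ := hN.bdd
  let g' : ℝ × ℝ → ℝ := fun x => g (colMap p q x)
  let N' : ℝ × ℝ × ℝ → ℝ := fun x => N (x.1, colMap p q x.2)
  have hg' : PNorm g' :=
    { add := by
        intro x y
        simp only [g', map_add]; exact hg.add _ _
      smul := by
        intro a x
        simp only [g', map_smul]; exact hg.smul _ _
      pos := by
        intro x hx
        exact hg.pos _ fun h => hx (colMap_inj hD h)
      cont := hg.cont.comp hcm
      bdd := by
        refine ⟨c2 * c1, by positivity, fun x => ?_⟩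
        rw [mul_assoc]
        exact (mul_le_mul_of_nonneg_left (hb1 x) hc2.le).trans (hb2 _)
      strict := by
        intro x y hxy
        simp only [g', map_add]
        apply hg.strict
        rw [cr_colMap]
        exact mul_ne_zero hxy hD.ne' }
  have hN' : SNorm N' :=
    { add := by
        intro x y
        have := hN.add (x.1, colMap p q x.2) (y.1, colMap p q y.2)
        simp only [N', Prod.fst_add, Prod.snd_add, map_add]
        exact this
      smul := by
        intro a x
        have := hN.smul a (x.1, colMap p q x.2)
        simp only [N', Prod.smul_fst, Prod.smul_snd, map_smul]
        exact this
      cont := hN.cont.comp (by fun_prop)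
      bdd := by
        refine ⟨c3 * min 1 c1, by positivity, fun x => ?_⟩
        rw [mul_assoc]
        refine (mul_le_mul_of_nonneg_left ?_ hc3.le).trans (hb3 _)
        have hm0 : 0 < min 1 c1 := by positivity
        rw [Prod.norm_def x, Prod.norm_def, mul_max_of_nonneg _ _ hm0.le]
        refine max_le_max ?_ ?_
        · have := mul_le_mul_of_nonneg_right (min_le_left 1 c1) (norm_nonneg x.1)
          simpa using this
        · exact (mul_le_mul_of_nonneg_right (min_le_right 1 c1) (norm_nonneg x.2)).trans (hb1 _) }
  have e10 : colMap p q (1, 0) = p := by rw [colMap_apply]; simp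
  have e01 : colMap p q (0, 1) = q := by rw [colMap_apply]; simp
  have hI : Hex g' (1, 0) (0, 1) := by
    refine ⟨?_, ?_, ?_, by simp [cr]⟩
    · simp only [g', e10]; exact hpq.hp
    · simp only [g', e01]; exact hpq.hq
    · simp only [g', map_sub, e10, e01]; exact hpq.hr
  have hmin' : ∀ u v, Hex g' u v → 1 ≤ cr u v := by
    intro u v h
    have h2 : Hex g (colMap p q u) (colMap p q v) := by
      refine ⟨h.hp, h.hq, ?_, ?_⟩
      · rw [← map_sub]; exact h.hr
      · rw [cr_colMap]; exact mul_pos h.hD hD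
    have := hmin _ _ h2
    rw [cr_colMap] at this
    exact le_of_mul_le_mul_right (by linarith) hD
  have hA := planar_area hg' hmin' hI
  obtain ⟨t, v, ht, hadm, hvol⟩ := spatial hN' (g := g') (fun x => by simp [N', g', hgdef]) hg' hI hA
  refine ⟨t, p, q, colMap p q v, ht, hD, ?_, ?_⟩
  · intro m n k h
    have := hadm m n k h
    have e : colMap p q (m + k * v.1, n + k * v.2)
        = (m : ℝ) • p + (n : ℝ) • q + (k : ℝ) • colMap p q v := by
      rw [colMap_apply, colMap_apply]; module
    simp only [N', e] at this
    exact this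
  · have hmN : MeasurableSet {x | N x ≤ 1} := hN.ball_compact.isClosed.measurableSet
    have hmN' : MeasurableSet {x | N' x ≤ 1} := hN'.ball_compact.isClosed.measurableSet
    have hv : volume {x | N x ≤ 1} = ENNReal.ofReal (cr p q) * volume {x | N' x ≤ 1} := by
      rw [Measure.volume_eq_prod, Measure.prod_apply hmN, Measure.prod_apply hmN',
        ← lintegral_const_mul _ (measurable_measure_prodMk_left hmN')]
      refine lintegral_congr fun t => ?_
      have := volume_colMap p q (Prod.mk t ⁻¹' {x | N' x ≤ 1})
      rw [abs_of_pos hD] at this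
      rw [← this]
      congr 1
      ext x
      constructor
      · intro hx
        refine ⟨(cr x q / cr p q, cr p x / cr p q), ?_, ?_⟩
        · show N (t, colMap p q (cr x q / cr p q, cr p x / cr p q)) ≤ 1
          rw [colMap_apply]
          simp only
          rw [← cr_decomp p q x hD]; exact hx
        · rw [colMap_apply]; exact (cr_decomp p q x hD).symm
      · rintro ⟨y, hy, rfl⟩
        exact hy
    have hr : volume.real {x | N x ≤ 1} = cr p q * volume.real {x | N' x ≤ 1} := by
      rw [measureReal_def, hv, ENNReal.toReal_mul, ENNReal.toReal_ofReal hD.le, measureReal_def]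
    rw [hr]
    nlinarith

/-- the planar euclidean seminorm -/
noncomputable def eu (x : ℝ × ℝ) : ℝ := ‖(⟨x.1, x.2⟩ : ℂ)‖

lemma eu_add (x y : ℝ × ℝ) : eu (x + y) ≤ eu x + eu y := by
  have : (⟨(x + y).1, (x + y).2⟩ : ℂ) = ⟨x.1, x.2⟩ + ⟨y.1, y.2⟩ := by
    apply Complex.ext <;> simp
  unfold eu
  rw [this]; exact norm_add_le _ _

lemma eu_smul (a : ℝ) (x : ℝ × ℝ) : eu (a • x) = |a| * eu x := by
  have : (⟨(a • x).1, (a • x).2⟩ : ℂ) = a • ⟨x.1, x.2⟩ := by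
    apply Complex.ext <;> simp
  unfold eu
  rw [this, norm_smul, Real.norm_eq_abs]

lemma eu_cont : Continuous eu := by
  have : Continuous fun x : ℝ × ℝ => (⟨x.1, x.2⟩ : ℂ) := Complex.equivRealProdCLM.symm.continuous
  exact this.norm

lemma eu_strict (x y : ℝ × ℝ) (h : cr x y ≠ 0) : eu (x + y) < eu x + eu y := by
  have e : (⟨(x + y).1, (x + y).2⟩ : ℂ) = ⟨x.1, x.2⟩ + ⟨y.1, y.2⟩ := by
    apply Complex.ext <;> simp
  unfold eu
  rw [e]
  apply norm_add_lt_of_not_sameRay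
  intro hs
  rw [sameRay_iff_norm_smul_eq] at hs
  have h1 := congrArg Complex.re hs
  have h2 := congrArg Complex.im hs
  simp only [Complex.smul_re, Complex.smul_im, smul_eq_mul] at h1 h2
  have h3 : ‖(⟨x.1, x.2⟩ : ℂ)‖ * cr x y = 0 := by
    unfold cr
    linear_combination x.1 * h2 - x.2 * h1
  rcases mul_eq_zero.1 h3 with h4 | h4
  · rw [norm_eq_zero] at h4
    have h5 := congrArg Complex.re h4
    have h6 := congrArg Complex.im h4
    simp only [Complex.zero_re, Complex.zero_im] at h5 h6
    apply h
    simp [cr, h5, h6]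
  · exact h h4

lemma eu_le (x : ℝ × ℝ) : eu x ≤ 2 * ‖x‖ := by
  unfold eu
  refine (Complex.norm_le_abs_re_add_abs_im _).trans ?_
  have h1 := norm_fst_le x
  have h2 := norm_snd_le x
  rw [Real.norm_eq_abs] at h1 h2
  simp only
  linarith

lemma eu_nonneg (x : ℝ × ℝ) : 0 ≤ eu x := norm_nonneg _

theorem spatial3 {N : ℝ × ℝ × ℝ → ℝ} (hN : SNorm N) :
    ∃ (t : ℝ) (p q w : ℝ × ℝ), 0 < t ∧ 0 < cr p q ∧
      (∀ m n k : ℤ, ¬ (m = 0 ∧ n = 0 ∧ k = 0) →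
        1 ≤ (1 + 0.00001) * N (k * t, (m : ℝ) • p + (n : ℝ) • q + (k : ℝ) • w)) ∧
      8 * t * cr p q * 0.54757 ≤ volume.real {x | N x ≤ 1} := by
  obtain ⟨c, hc, hb⟩ := hN.bdd
  obtain ⟨η, hη⟩ : ∃ η, η = c / 2 * 0.00001 := ⟨_, rfl⟩
  have hη0 : 0 < η := by rw [hη]; positivity
  let N1 : ℝ × ℝ × ℝ → ℝ := fun x => N x + η * eu x.2
  have hle : ∀ x, N x ≤ N1 x := fun x => by
    have := mul_nonneg hη0.le (eu_nonneg x.2)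
    simp only [N1]; linarith
  have hle2 : ∀ x, N1 x ≤ (1 + 0.00001) * N x := fun x => by
    have h1 := eu_le x.2
    have h2 := norm_snd_le x
    have h3 := hb x
    have h4 : η * eu x.2 ≤ 0.00001 * N x := by
      calc η * eu x.2 ≤ η * (2 * ‖x‖) := mul_le_mul_of_nonneg_left (by linarith) hη0.le
        _ = 0.00001 * (c * ‖x‖) := by rw [hη]; ring
        _ ≤ _ := mul_le_mul_of_nonneg_left h3 (by norm_num)
    simp only [N1]; linarith
  have hN1 : SNorm N1 :=
    { add := by
        intro x y
        have h1 := hN.add x y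
        have h2 := mul_le_mul_of_nonneg_left (eu_add x.2 y.2) hη0.le
        simp only [N1, Prod.snd_add]; linarith
      smul := by
        intro a x
        simp only [N1, Prod.smul_snd, hN.smul, eu_smul]; ring
      cont := hN.cont.add (continuous_const.mul (eu_cont.comp continuous_snd))
      bdd := ⟨c, hc, fun x => (hb x).trans (hle x)⟩ }
  have hg : PNorm fun x => N1 (0, x) :=
    { add := by
        intro x y
        have := hN1.add (0, x) (0, y)
        simpa using this
      smul := by
        intro a x
        have := hN1.smul a (0, x)
        simpa using this
      pos := by
        intro x hx
        apply hN1.pos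
        intro h
        exact hx (congrArg Prod.snd h)
      cont := hN1.cont.comp (by fun_prop)
      bdd := by
        refine ⟨c, hc, fun x => ?_⟩
        refine le_trans ?_ ((hb (0, x)).trans (hle _))
        have : ‖((0:ℝ), x)‖ = ‖x‖ := by
          rw [Prod.norm_def]; simp
        rw [this]
      strict := by
        intro x y hxy
        have h1 := hN.add (0, x) (0, y)
        have h2 := mul_lt_mul_of_pos_left (eu_strict x y hxy) hη0
        simp only [N1]
        rw [Prod.mk_add_mk, add_zero] at h1
        linarith }
  obtain ⟨t, p, q, w, ht, hD, hadm, hvol⟩ := spatial2 hN1 hg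
  refine ⟨t, p, q, w, ht, hD, fun m n k h => (hadm m n k h).trans (hle2 _), hvol.trans ?_⟩
  refine measureReal_mono ?_ hN.ball_compact.measure_lt_top.ne
  intro x hx
  exact (hle x).trans hx

/-- the coordinate identification -/
def kap (w : ℝ × ℝ × ℝ) : Fin 3 → ℝ := ![w.1, w.2.1, w.2.2]

lemma kap_add (x y : ℝ × ℝ × ℝ) : kap (x + y) = kap x + kap y := by
  funext i; fin_cases i <;> simp [kap]

lemma kap_smul (a : ℝ) (x : ℝ × ℝ × ℝ) : kap (a • x) = a • kap x := by
  funext i; fin_cases i <;> simp [kap]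

lemma kap_cont : Continuous kap := by
  unfold kap
  refine continuous_pi fun i => ?_
  fin_cases i
  · exact continuous_fst
  · exact continuous_fst.comp continuous_snd
  · exact continuous_snd.comp continuous_snd

lemma kap_norm (x : ℝ × ℝ × ℝ) : ‖x‖ ≤ ‖kap x‖ := by
  rw [Prod.norm_def, Prod.norm_def]
  refine max_le ?_ (max_le ?_ ?_)
  · exact norm_le_pi_norm (kap x) 0
  · exact norm_le_pi_norm (kap x) 1
  · exact norm_le_pi_norm (kap x) 2

lemma kap_vol (S : Set (Fin 3 → ℝ)) : volume (kap ⁻¹' S) = volume S := by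
  let e1 := MeasurableEquiv.piFinSuccAbove (fun _ : Fin 3 => ℝ) 0
  let e2 : ℝ × (Fin 2 → ℝ) ≃ᵐ ℝ × (ℝ × ℝ) :=
    (MeasurableEquiv.refl ℝ).prodCongr (MeasurableEquiv.finTwoArrow (α := ℝ))
  have h1 : MeasurePreserving e1 volume volume :=
    volume_preserving_piFinSuccAbove (fun _ : Fin 3 => ℝ) 0
  have h2 : MeasurePreserving e2 volume volume :=
    (MeasurePreserving.id volume).prod (volume_preserving_finTwoArrow ℝ)
  have h3 : MeasurePreserving (e1.trans e2) volume volume := h2.comp h1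
  have h4 := h3.measure_preimage_equiv (kap ⁻¹' S)
  rw [← h4]
  congr 1
  ext f
  have : kap (e1.trans e2 f) = f := by
    funext i; fin_cases i <;> rfl
  rw [Set.mem_preimage, Set.mem_preimage, this]

/-- Every centrally symmetric convex body `K ⊆ ℝ³` admits a lattice packing
of density at least `0.54755`. -/
theorem packing_density_bound_3space (K : Set (Fin 3 → ℝ))
    (hKcompact : IsCompact K) (hKconv : Convex ℝ K)
    (hKint : (interior K).Nonempty) (hKsymm : K = -K) :
    ∃ M : Matrix (Fin 3) (Fin 3) ℝ, IsLatticePacking M K ∧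
      (volume K).toReal / covol M ≥ 0.54755 := by
  have hsym : ∀ x ∈ K, -x ∈ K := by
    intro x hx
    rw [hKsymm] at hx
    exact hx
  have hK0 : K ∈ nhds (0 : Fin 3 → ℝ) := by
    obtain ⟨x, hx⟩ := hKint
    have hnx : -x ∈ interior K := by
      have hi : interior (-K) = -interior K :=
        ((Homeomorph.neg (Fin 3 → ℝ)).preimage_interior K).symm
      rw [hKsymm, hi]
      simpa using hx
    have := hKconv.interior hx hnx (a := 1 / 2) (b := 1 / 2) (by norm_num) (by norm_num)
      (by norm_num)
    rw [smul_neg, add_neg_cancel] at this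
    exact mem_interior_iff_mem_nhds.1 this
  have habs : Absorbent ℝ K := absorbent_nhds_zero hK0
  obtain ⟨R, hR0, hR⟩ : ∃ R > 0, K ⊆ Metric.closedBall (0 : Fin 3 → ℝ) R := by
    obtain ⟨R, hR⟩ := hKcompact.isBounded.subset_closedBall 0
    exact ⟨max R 1, by positivity, hR.trans (Metric.closedBall_subset_closedBall (le_max_left _ _))⟩
  have gsmul : ∀ (a : ℝ) x, gauge K (a • x) = |a| * gauge K x := by
    intro a x
    rcases le_total 0 a with h | h
    · rw [gauge_smul_of_nonneg h, abs_of_nonneg h, smul_eq_mul]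
    · have : a • x = -((-a) • x) := by simp
      rw [this, gauge_neg hsym, gauge_smul_of_nonneg (neg_nonneg.2 h), abs_of_nonpos h, smul_eq_mul]
  let N : ℝ × ℝ × ℝ → ℝ := fun w => gauge K (kap w)
  have hN : SNorm N :=
    { add := by
        intro x y
        simp only [N, kap_add]; exact gauge_add_le hKconv habs _ _
      smul := by
        intro a x
        simp only [N, kap_smul]; exact gsmul _ _
      cont := (continuous_gauge hKconv hK0).comp kap_cont
      bdd := by
        refine ⟨1 / R, by positivity, fun x => ?_⟩
        have h1 := le_gauge_of_subset_closedBall (x := kap x) habs hR0.le hR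
        have h2 := kap_norm x
        refine le_trans ?_ h1
        rw [one_div_mul_eq_div]
        gcongr }
  have hKN : {x | N x ≤ 1} = kap ⁻¹' K := by
    ext x
    have := gauge_le_one_iff_mem_closure (x := kap x) hKconv hK0
    rw [hKcompact.isClosed.closure_eq] at this
    exact this
  obtain ⟨t, p, q, w, ht, hD, hadm, hvol⟩ := spatial3 hN
  rw [hKN, measureReal_def, kap_vol] at hvol
  let ρ : ℝ := 2 * (1 + 0.00001)
  let M : Matrix (Fin 3) (Fin 3) ℝ :=
    !![0, 0, ρ * t; ρ * p.1, ρ * q.1, ρ * w.1; ρ * p.2, ρ * q.2, ρ * w.2]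
  have hdet : M.det = ρ ^ 3 * (t * cr p q) := by
    simp only [M, Matrix.det_fin_three, cr]
    simp
    ring
  have hρ : 0 < ρ := by simp only [ρ]; norm_num
  have hdp : 0 < M.det := by rw [hdet]; positivity
  have hMv : ∀ z : Fin 3 → ℤ, M.mulVec (fun i => (z i : ℝ))
      = ρ • kap (z 2 * t, (z 0 : ℝ) • p + (z 1 : ℝ) • q + (z 2 : ℝ) • w) := by
    intro z
    funext i
    fin_cases i <;> simp [M, kap, Matrix.mulVec, dotProduct, Fin.sum_univ_three] <;> ring
  refine ⟨M, ⟨hdp.ne', ?_⟩, ?_⟩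
  · rintro l ⟨z, hz⟩ l' ⟨z', hz'⟩ hne
    rw [Set.disjoint_left]
    intro y hy hy'
    rw [interior_vadd] at hy hy'
    obtain ⟨k, hk, rfl⟩ := hy
    obtain ⟨k', hk', e⟩ := hy'
    have e : l' + k' = l + k := e
    have h1 := (gauge_lt_one_iff_mem_interior hKconv hK0).2 hk
    have h2 := (gauge_lt_one_iff_mem_interior hKconv hK0).2 hk'
    have h3 : gauge K (l - l') < 2 := by
      have : l - l' = k' + -k := by
        have := eq_sub_of_add_eq e
        rw [this]; abel
      rw [this]
      have h4 := gauge_add_le hKconv habs k' (-k)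
      rw [gauge_neg hsym] at h4
      linarith
    have h5 : l - l' = M.mulVec (fun i => ((z i - z' i : ℤ) : ℝ)) := by
      rw [hz, hz', ← Matrix.mulVec_sub]
      congr 1
      funext i
      simp
    rw [h5, hMv (fun i => z i - z' i), gsmul, abs_of_pos hρ] at h3
    have h6 := hadm (z 0 - z' 0) (z 1 - z' 1) (z 2 - z' 2) (by
      rintro ⟨a0, a1, a2⟩
      apply hne
      rw [hz, hz']
      have : z = z' := by
        funext i
        fin_cases i
        · exact sub_eq_zero.1 a0
        · exact sub_eq_zero.1 a1
        · exact sub_eq_zero.1 a2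
      rw [this])
    simp only [N] at h6
    simp only [ρ] at h3
    linarith
  · unfold covol
    rw [abs_of_pos hdp, ge_iff_le, le_div_iff₀ hdp, hdet]
    refine le_trans ?_ hvol
    have h0 : 0 < t * cr p q := mul_pos ht hD
    simp only [ρ]
    nlinarith
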